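/- arXiv:1303.5509 — 3 statements merged into one kernel-verified Lean document; each statement's English description precedes it below -/
import Mathlib

section
/- Let q be a prime power and let ℓ be a line of PG(2,q³). The number of order-q-subplanes of PG(2,q³) that are tangent to ℓ (i.e. meet ℓ in exactly one point) is q⁷(q³−1)(q³+1)(q²+q+1). -/
namespace TangentSplashPaper

open Projectivization

/-- The point set of the projective plane `PG(2,K)`. -/
abbrev PGPoint (K : Type*) [Field K] := Projectivization K (Fin 3 → K)

/-- `ℓ` is a line of `PG(2,K)`: the set of points lying in a fixed
2-dimensional linear subspace. -/
def IsLine {K : Type*} [Field K] (ℓ : Set (PGPoint K)) : Prop :=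
  ∃ W : Submodule K (Fin 3 → K), Module.finrank K W = 2 ∧
    ℓ = {P : PGPoint K | P.submodule ≤ W}

/-- The distinguished line `ℓ∞` of `PG(2,K)`: points whose last homogeneous
coordinate vanishes. -/
def linf (K : Type*) [Field K] : Set (PGPoint K) := {P : PGPoint K | P.rep 2 = 0}

/-- The homography of `PG(2,K)` induced by a linear automorphism of `K³`;
as maps of point sets, these are exactly the elements of `PGL(3,K)`. -/
def hmap {K : Type*} [Field K] (f : (Fin 3 → K) ≃ₗ[K] (Fin 3 → K)) :
    PGPoint K → PGPoint K :=
  Projectivization.map f.toLinearMap f.injective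

/-- The base subplane `PG(2,F)`: points admitting homogeneous coordinates in
the subfield `F`. -/
def basePlane (F K : Type*) [Field F] [Field K] [Algebra F K] : Set (PGPoint K) :=
  {P : PGPoint K | ∃ v : Fin 3 → K, ∃ hv : v ≠ 0, P = Projectivization.mk K v hv ∧
    ∀ i, v i ∈ (algebraMap F K).range}

/-- An order-`q`-subplane of `PG(2,K)` (`q = |F|`): an image of `PG(2,F)`
under a homography. -/
def IsSubplane (F : Type*) {K : Type*} [Field F] [Field K] [Algebra F K]
    (S : Set (PGPoint K)) : Prop :=
  ∃ f : (Fin 3 → K) ≃ₗ[K] (Fin 3 → K), S = hmap f '' basePlane F K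

/-- An order-`q`-subline of `PG(2,K)`: the intersection of an order-`q`-subplane
with a line of `PG(2,K)` meeting it in `q+1` points. -/
def IsSubline (F : Type*) {K : Type*} [Field F] [Field K] [Algebra F K] (q : ℕ)
    (b : Set (PGPoint K)) : Prop :=
  ∃ S ℓ : Set (PGPoint K), IsSubplane F S ∧ IsLine ℓ ∧
    (S ∩ ℓ).ncard = q + 1 ∧ b = S ∩ ℓ

/-- The splash of a subplane `π` on `ℓ∞`: all points of `ℓ∞` lying on a line
of `PG(2,K)` spanned by two points of `π`. -/
def splash {K : Type*} [Field K] (π : Set (PGPoint K)) : Set (PGPoint K) :=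
  {X : PGPoint K | X ∈ linf K ∧ ∃ P Q : PGPoint K, P ∈ π ∧ Q ∈ π ∧ P ≠ Q ∧
    ∃ ℓ : Set (PGPoint K), IsLine ℓ ∧ P ∈ ℓ ∧ Q ∈ ℓ ∧ X ∈ ℓ}

/-- `S` is a tangent splash of `ℓ∞` with centre `T`: `S` is the splash of some
order-`q`-subplane meeting `ℓ∞` exactly in the point `T`. -/
def IsTangentSplash (F : Type*) {K : Type*} [Field F] [Field K] [Algebra F K]
    (S : Set (PGPoint K)) (T : PGPoint K) : Prop :=
  ∃ π : Set (PGPoint K), IsSubplane F π ∧ π ∩ linf K = {T} ∧ S = splash π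

/-- The set `t_P`: points of `ℓ∞` lying on the extension of a line of the
subplane `π` through the point `P` (lines of `π` are the lines of `PG(2,K)`
meeting `π` in `q+1` points). -/
def pencilTrace {K : Type*} [Field K] (q : ℕ) (π : Set (PGPoint K))
    (P : PGPoint K) : Set (PGPoint K) :=
  {X : PGPoint K | X ∈ linf K ∧ ∃ ℓ : Set (PGPoint K), IsLine ℓ ∧ P ∈ ℓ ∧
    (π ∩ ℓ).ncard = q + 1 ∧ X ∈ ℓ}

lemma card_ne {L : Type*} [Field L] [Finite L] :
    Nat.card {x : Fin 3 → L | x ≠ 0} = Nat.card L ^ 3 - 1 := by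
  have h := Set.ncard_compl ({0} : Set (Fin 3 → L))
  rw [Set.ncard_singleton, Nat.card_pi] at h
  rw [Nat.card_coe_set_eq]
  simpa [Set.compl_singleton_eq] using h

open Matrix in
lemma dc {α β : Type*} [Finite α] [Finite β] (r : α → β → Prop) (A : Set α) (B : Set β) (m n : ℕ)
    (hm : ∀ a ∈ A, Nat.card {b // b ∈ B ∧ r a b} = m)
    (hn : ∀ b ∈ B, Nat.card {a // a ∈ A ∧ r a b} = n) : Nat.card A * m = Nat.card B * n := by
  classical
  have := Fintype.ofFinite α
  have := Fintype.ofFinite β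
  have h := Finset.card_mul_eq_card_mul (s := A.toFinset) (t := B.toFinset) (m := m) (n := n) r ?_ ?_
  · rw [Set.toFinset_card, Set.toFinset_card] at h
    rw [Nat.card_eq_fintype_card, Nat.card_eq_fintype_card]; exact h
  · intro a ha
    rw [← hm a (by simpa using ha), Nat.card_eq_fintype_card, Fintype.card_subtype]
    congr 1; ext b; simp [Finset.bipartiteAbove]
  · intro a ha
    rw [← hn a (by simpa using ha), Nat.card_eq_fintype_card, Fintype.card_subtype]
    congr 1; ext b; simp [Finset.bipartiteBelow]

lemma trans_equiv {L : Type*} [Field L] (u v : Fin 3 → L) (hu : u ≠ 0) (hv : v ≠ 0) :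
    ∃ g : (Fin 3 → L) ≃ₗ[L] (Fin 3 → L), g u = v := by
  let f := (LinearEquiv.toSpanNonzeroSingleton L (Fin 3 → L) u hu).symm ≪≫ₗ
    (LinearEquiv.toSpanNonzeroSingleton L (Fin 3 → L) v hv)
  obtain ⟨g, hg⟩ := Submodule.exists_linearEquiv_restrict_eq f
  refine ⟨g, ?_⟩
  have h1 := hg ⟨u, Submodule.mem_span_singleton_self u⟩
  have h2 : (LinearEquiv.toSpanNonzeroSingleton L (Fin 3 → L) u hu).symm
      ⟨u, Submodule.mem_span_singleton_self u⟩ = 1 := by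
    rw [LinearEquiv.symm_apply_eq, LinearEquiv.toSpanNonzeroSingleton_one]
  simp only [f, LinearEquiv.trans_apply, h2, LinearEquiv.toSpanNonzeroSingleton_one] at h1
  exact h1.symm

lemma exists_GL {L : Type*} [Field L] (g : (Fin 3 → L) ≃ₗ[L] (Fin 3 → L)) :
    ∃ M : GL (Fin 3) L, ∀ x, Matrix.mulVec M.1 x = g x := by
  refine ⟨Matrix.GeneralLinearGroup.toLin.symm (LinearMap.GeneralLinearGroup.ofLinearEquiv g), ?_⟩
  intro x
  have := Matrix.GeneralLinearGroup.toLin_apply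
    (Matrix.GeneralLinearGroup.toLin.symm (LinearMap.GeneralLinearGroup.ofLinearEquiv g)) x
  rw [MulEquiv.apply_symm_apply] at this
  exact this.symm

lemma exists_equiv {L : Type*} [Field L] (M : GL (Fin 3) L) :
    ∃ g : (Fin 3 → L) ≃ₗ[L] (Fin 3 → L), ∀ x, Matrix.mulVec M.1 x = g x := by
  refine ⟨LinearMap.GeneralLinearGroup.toLinearEquiv (Matrix.GeneralLinearGroup.toLin M), ?_⟩
  intro x
  rfl

open Matrix in
lemma trans_row {L : Type*} [Field L] (u v : Fin 3 → L) (hu : u ≠ 0) (hv : v ≠ 0) :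
    ∃ M : GL (Fin 3) L, u ᵥ* M.1 = v := by
  obtain ⟨g, hg⟩ := trans_equiv u v hu hv
  obtain ⟨M, hM⟩ := exists_GL g
  refine ⟨Matrix.GeneralLinearGroup.mkOfDetNeZero M.1ᵀ ?_, ?_⟩
  · rw [Matrix.det_transpose]
    exact (M.isUnit.map Matrix.detMonoidHom).ne_zero
  · show u ᵥ* M.1ᵀ = v
    rw [Matrix.vecMul_transpose, hM, hg]

open Matrix in
lemma vecMul_GL_ne {L : Type*} [Field L] (u : Fin 3 → L) (hu : u ≠ 0) (M : GL (Fin 3) L) :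
    u ᵥ* M.1 ≠ 0 := by
  intro h
  apply hu
  have : (u ᵥ* M.1) ᵥ* (M⁻¹).1 = u := by
    rw [Matrix.vecMul_vecMul, ← Units.val_mul, mul_inv_cancel]; simp
  rw [← this, h]; simp

open Matrix in
/-- Counting invertible matrices carrying a fixed nonzero row into a set of nonzero rows. -/
lemma card_row {L : Type*} [Field L] [Finite L] (u : Fin 3 → L) (hu : u ≠ 0)
    (N : Set (Fin 3 → L)) (hN : ∀ x ∈ N, x ≠ 0) :
    Nat.card {M : GL (Fin 3) L | u ᵥ* M.1 ∈ N} * (Nat.card L ^ 3 - 1)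
      = Nat.card (GL (Fin 3) L) * Nat.card N := by
  classical
  have key : ∀ v, v ≠ 0 → Nat.card {M : GL (Fin 3) L // u ᵥ* M.1 = v}
      = Nat.card {M : GL (Fin 3) L // u ᵥ* M.1 = u} := by
    intro v hv
    obtain ⟨M0, h0⟩ := trans_row u v hu hv
    have h0' : v ᵥ* (M0⁻¹).1 = u := by
      rw [← h0, Matrix.vecMul_vecMul, ← Units.val_mul, mul_inv_cancel]; simp
    refine Nat.card_congr ((Equiv.mulRight M0⁻¹).subtypeEquiv ?_)
    intro M
    simp only [Equiv.coe_mulRight, Units.val_mul, ← Matrix.vecMul_vecMul]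
    constructor
    · intro h; rw [h, h0']
    · intro h
      rw [← h0]
      conv_rhs => rw [← h]
      rw [Matrix.vecMul_vecMul, Matrix.vecMul_vecMul, ← Units.val_mul,
        inv_mul_cancel]; simp
  have main : ∀ N : Set (Fin 3 → L), (∀ x ∈ N, x ≠ 0) →
      Nat.card {M : GL (Fin 3) L | u ᵥ* M.1 ∈ N} * 1 =
        Nat.card N * Nat.card {M : GL (Fin 3) L // u ᵥ* M.1 = u} := by
    intro N hN
    refine dc (fun M v => u ᵥ* M.1 = v) _ _ _ _ ?_ ?_
    · intro M hM
      rw [Nat.card_eq_one_iff_unique]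
      refine ⟨⟨?_⟩, ⟨⟨_, hM, rfl⟩⟩⟩
      rintro ⟨a, _, ha⟩ ⟨b, _, hb⟩
      simp only [Subtype.mk.injEq]; rw [← ha, hb]
    · intro v hv
      rw [← key v (hN v hv)]
      refine Nat.card_congr (Equiv.subtypeEquivRight ?_)
      intro M
      simp only [Set.mem_ofPred_eq, and_iff_right_iff_imp]
      intro h; rw [h]; exact hv
  have h1 := main N hN
  have h2 := main {x | x ≠ 0} (fun x hx => hx)
  have h3 : Nat.card {M : GL (Fin 3) L | u ᵥ* M.1 ∈ {x : Fin 3 → L | x ≠ 0}}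
      = Nat.card (GL (Fin 3) L) := by
    have : {M : GL (Fin 3) L | u ᵥ* M.1 ∈ {x : Fin 3 → L | x ≠ 0}} = Set.univ := by
      ext M; simpa using vecMul_GL_ne u hu M
    rw [this, Nat.card_univ]
  have h4 := card_ne (L := L)
  rw [h3, h4] at h2
  rw [mul_one] at h1 h2
  rw [h1, h2]; ring

/-- `w` spans the kernel of the `F`-linear map `F³ → K` given by `ψ`. -/
def KerSpan (F : Type*) {K : Type*} [Field F] [Field K] [Algebra F K]
    (ψ : Fin 3 → K) (w : Fin 3 → F) : Prop :=
  ∀ x : Fin 3 → F, Fintype.linearCombination F ψ x = 0 ↔ ∃ c : F, x = c • w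

/-- Row vectors of `F`-rank two. -/
def RankTwo (F K : Type*) [Field F] [Field K] [Algebra F K] : Set (Fin 3 → K) :=
  {ψ | ∃ w : Fin 3 → F, w ≠ 0 ∧ KerSpan F ψ w}

lemma kerSpan_e0 {F K : Type*} [Field F] [Field K] [Algebra F K] (ψ : Fin 3 → K) :
    KerSpan F ψ ![1,0,0] ↔ ψ 0 = 0 ∧ LinearIndependent F ![ψ 1, ψ 2] := by
  rw [LinearIndependent.pair_iff]
  unfold KerSpan
  simp only [Fintype.linearCombination_apply, Fin.sum_univ_three]
  constructor
  · intro h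
    have h0 : ψ 0 = 0 := by
      have := (h ![1,0,0]).2 ⟨1, by simp⟩
      simpa using this
    refine ⟨h0, ?_⟩
    intro s t hst
    obtain ⟨c, hc⟩ := (h ![0,s,t]).1 (by simpa [h0] using hst)
    have h1 := congrFun hc 1
    have h2 := congrFun hc 2
    simp at h1 h2
    exact ⟨h1, h2⟩
  · rintro ⟨h0, h⟩ x
    constructor
    · intro hx
      obtain ⟨h1, h2⟩ := h (x 1) (x 2) (by simpa [h0] using hx)
      refine ⟨x 0, ?_⟩
      ext i; fin_cases i <;> simp [h1, h2]
    · rintro ⟨c, rfl⟩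
      simp [h0]

lemma card_kerSpan {F K : Type*} [Field F] [Field K] [Algebra F K] [Fintype F] [Finite K]
    (hr : Module.finrank F K = 3) (w : Fin 3 → F) (hw : w ≠ 0) :
    Nat.card {ψ : Fin 3 → K // KerSpan F ψ w} =
      (Fintype.card F ^ 3 - 1) * (Fintype.card F ^ 3 - Fintype.card F) := by
  have e1 : Nat.card {ψ : Fin 3 → K // KerSpan F ψ w} =
      Nat.card {ψ : Fin 3 → K // KerSpan F ψ ![1,0,0]} := by
    obtain ⟨g, hg⟩ := trans_equiv ![1,0,0] w (by intro h; simpa using congrFun h 0) hw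
    obtain ⟨M, hM⟩ := exists_GL g
    have hlin : ∀ (A : GL (Fin 3) F) (ψ : Fin 3 → K) (x : Fin 3 → F),
        Fintype.linearCombination F (fun j => ∑ i, A.1 i j • ψ i) x =
          Fintype.linearCombination F ψ (Matrix.mulVec A.1 x) := by
      intro A ψ x
      simp only [Fintype.linearCombination_apply, Matrix.mulVec, dotProduct, Finset.smul_sum,
        Finset.sum_smul, smul_smul]
      rw [Finset.sum_comm]
      simp only [mul_comm]
    have hcomp : ∀ (A B : GL (Fin 3) F) (hAB : A * B = 1) (ψ : Fin 3 → K),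
        (fun j => ∑ i, B.1 i j • (∑ k, A.1 k i • ψ k)) = ψ := by
      intro A B hAB ψ
      have h1 : ∀ x, Fintype.linearCombination F
          (fun j => ∑ i, B.1 i j • (∑ k, A.1 k i • ψ k)) x = Fintype.linearCombination F ψ x := by
        intro x
        rw [hlin B (fun i => ∑ k, A.1 k i • ψ k), hlin, Matrix.mulVec_mulVec, ← Units.val_mul, hAB]
        simp
      funext j
      have := h1 (Pi.single j 1)
      simpa [Fintype.linearCombination_apply_single] using this
    let E : (Fin 3 → K) ≃ (Fin 3 → K) :=
      { toFun := fun ψ j => ∑ i, M.1 i j • ψ i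
        invFun := fun ψ j => ∑ i, (M⁻¹).1 i j • ψ i
        left_inv := fun ψ => hcomp M M⁻¹ (mul_inv_cancel M) ψ
        right_inv := fun ψ => hcomp M⁻¹ M (inv_mul_cancel M) ψ }
    refine Nat.card_congr (E.subtypeEquiv ?_)
    intro ψ
    have hE : ∀ x, Fintype.linearCombination F (E ψ) x = Fintype.linearCombination F ψ (g x) := by
      intro x; rw [← hM x]; exact hlin M ψ x
    unfold KerSpan
    simp only [hE]
    rw [← g.toEquiv.forall_congr_right]
    refine forall_congr' fun x => ?_
    have : (∃ c : F, g.toEquiv x = c • w) ↔ ∃ c : F, x = c • ![1,0,0] := by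
      refine exists_congr fun c => ?_
      rw [← hg, ← map_smul]
      exact g.injective.eq_iff
    rw [this]; rfl
  have e2 : Nat.card {ψ : Fin 3 → K // KerSpan F ψ ![1,0,0]} =
      Nat.card {s : Fin 2 → K // LinearIndependent F s} := by
    refine Nat.card_congr
      { toFun := fun ψ => ⟨![ψ.1 1, ψ.1 2], ((kerSpan_e0 _).1 ψ.2).2⟩
        invFun := fun s => ⟨![0, s.1 0, s.1 1], (kerSpan_e0 _).2 ⟨by simp, ?_⟩⟩
        left_inv := ?_
        right_inv := ?_ }
    · convert s.2 using 1
      ext i; fin_cases i <;> simp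
    · rintro ⟨ψ, h⟩
      have := ((kerSpan_e0 _).1 h).1
      ext i; fin_cases i <;> simp [this]
    · rintro ⟨s, h⟩
      ext i; fin_cases i <;> simp
  rw [e1, e2, card_linearIndependent (by omega), hr]
  simp [Fin.prod_univ_two]

lemma card_rankTwo {F K : Type*} [Field F] [Field K] [Algebra F K] [Fintype F] [Finite K]
    (hr : Module.finrank F K = 3) :
    Nat.card (RankTwo F K) * (Fintype.card F - 1) =
      (Fintype.card F ^ 3 - 1) * ((Fintype.card F ^ 3 - 1) * (Fintype.card F ^ 3 - Fintype.card F)) := by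
  have h := dc (fun (ψ : Fin 3 → K) (w : Fin 3 → F) => KerSpan F ψ w) (RankTwo F K) {w | w ≠ 0}
    (Fintype.card F - 1) ((Fintype.card F ^ 3 - 1) * (Fintype.card F ^ 3 - Fintype.card F)) ?_ ?_
  · rw [h, card_ne, Nat.card_eq_fintype_card]
  · rintro ψ ⟨w, hw, h⟩
    classical
    have : Nat.card Fˣ = Fintype.card F - 1 := by
      rw [Nat.card_eq_fintype_card, Fintype.card_units]
    rw [← this]
    symm
    refine Nat.card_congr (Equiv.ofBijective (fun c : Fˣ => ⟨c • w, ?_, ?_⟩) ⟨?_, ?_⟩)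
    · simpa [smul_eq_zero_iff_eq] using hw
    · intro x
      rw [h x]
      constructor
      · rintro ⟨d, rfl⟩
        exact ⟨d * (c⁻¹ : Fˣ), by rw [Units.smul_def, smul_smul, mul_assoc, Units.inv_mul, mul_one]⟩
      · rintro ⟨d, rfl⟩
        exact ⟨d * c, by rw [Units.smul_def, smul_smul]⟩
    · intro c d hcd
      simp only [Subtype.mk.injEq, Units.smul_def] at hcd
      exact Units.ext (smul_left_injective F hw hcd)
    · rintro ⟨x, hx, hx'⟩
      obtain ⟨c, rfl⟩ := (h x).1 ((hx' x).2 ⟨1, by simp⟩)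
      have hc : c ≠ 0 := by rintro rfl; simp at hx
      exact ⟨Units.mk0 c hc, by simp [Units.smul_def]⟩
  · intro w hw
    rw [← card_kerSpan hr w hw]
    refine Nat.card_congr (Equiv.subtypeEquivRight ?_)
    intro ψ
    exact ⟨fun h => h.2, fun h => ⟨⟨w, hw, h⟩, h⟩⟩

/-- Coordinatewise embedding `F³ → K³`. -/
def emb (F K : Type*) [Field F] [Field K] [Algebra F K] (w : Fin 3 → F) : Fin 3 → K :=
  fun i => algebraMap F K (w i)

/-- The subplane attached to an invertible matrix. -/
def plane (F : Type*) {K : Type*} [Field F] [Field K] [Algebra F K] (M : GL (Fin 3) K) :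
    Set (PGPoint K) :=
  {P | ∃ w : Fin 3 → F, ∃ h : Matrix.mulVec M.1 (emb F K w) ≠ 0, P = Projectivization.mk K _ h}

section
variable {F K : Type*} [Field F] [Field K] [Algebra F K]

lemma emb_ne (w : Fin 3 → F) : emb F K w ≠ 0 ↔ w ≠ 0 := by
  rw [not_iff_not]
  simp [emb, funext_iff]

open Matrix in
lemma mulVec_GL_ne {L : Type*} [Field L] (u : Fin 3 → L) (M : GL (Fin 3) L) :
    M.1 *ᵥ u ≠ 0 ↔ u ≠ 0 := by
  rw [not_iff_not]
  constructor
  · intro h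
    have : (M⁻¹).1 *ᵥ (M.1 *ᵥ u) = u := by
      rw [Matrix.mulVec_mulVec, ← Units.val_mul, inv_mul_cancel]; simp
    rw [← this, h]; simp
  · rintro rfl; simp

lemma isSubplane_iff (S : Set (PGPoint K)) : IsSubplane F S ↔ ∃ M : GL (Fin 3) K, S = plane F M := by
  have key : ∀ (f : (Fin 3 → K) ≃ₗ[K] (Fin 3 → K)) (M : GL (Fin 3) K),
      (∀ x, Matrix.mulVec M.1 x = f x) → hmap f '' basePlane F K = plane F M := by
    intro f M h
    ext P
    constructor
    · rintro ⟨Q, ⟨v, hv, rfl, hv'⟩, rfl⟩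
      choose w hw using hv'
      have hwv : emb F K w = v := funext hw
      subst hwv
      refine ⟨w, (mulVec_GL_ne _ _).2 hv, ?_⟩
      unfold hmap
      rw [Projectivization.map_mk]
      congr 1
      exact (h _).symm
    · rintro ⟨w, hw, rfl⟩
      have hw' := (mulVec_GL_ne _ _).1 hw
      refine ⟨Projectivization.mk K (emb F K w) hw', ⟨_, hw', rfl, fun i => ⟨w i, rfl⟩⟩, ?_⟩
      unfold hmap
      rw [Projectivization.map_mk]
      congr 1
      exact (h _).symm
  constructor
  · rintro ⟨f, rfl⟩
    obtain ⟨M, hM⟩ := exists_GL f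
    exact ⟨M, key f M hM⟩
  · rintro ⟨M, rfl⟩
    obtain ⟨f, hf⟩ := exists_equiv M
    exact ⟨f, (key f M hf).symm⟩

open Matrix

lemma emb_mulVec (g : Matrix (Fin 3) (Fin 3) F) (w : Fin 3 → F) :
    emb F K (g *ᵥ w) = (g.map (algebraMap F K)) *ᵥ emb F K w := by
  ext i
  simp [emb, Matrix.mulVec, dotProduct]

/-- The homomorphism `(λ, g) ↦ λ g` from `Kˣ × GL₃(F)` to `GL₃(K)`. -/
def sg (F K : Type*) [Field F] [Field K] [Algebra F K] : Kˣ × GL (Fin 3) F →* GL (Fin 3) K :=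
  MonoidHom.mk' (fun p => GeneralLinearGroup.scalar (Fin 3) p.1 *
    GeneralLinearGroup.map (algebraMap F K) p.2) (by
    rintro ⟨a, g⟩ ⟨b, h⟩
    simp only [Prod.mk_mul_mk, map_mul]
    rw [mul_assoc, mul_assoc]
    congr 1
    rw [← mul_assoc, ← mul_assoc, GeneralLinearGroup.scalar_commute])

lemma sg_mulVec (l : Kˣ) (g : GL (Fin 3) F) (w : Fin 3 → F) :
    (sg F K (l, g)).1 *ᵥ emb F K w = l.1 • emb F K (g.1 *ᵥ w) := by
  rw [emb_mulVec]
  have : (sg F K (l, g)).1 = l.1 • (g.1.map (algebraMap F K)) := by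
    ext i j
    simp [sg]
  rw [this, Matrix.smul_mulVec]

lemma plane_mul_sg_le (M : GL (Fin 3) K) (p : Kˣ × GL (Fin 3) F) :
    plane F (M * sg F K p) ⊆ plane F M := by
  obtain ⟨l, g⟩ := p
  rintro P ⟨w, hw, rfl⟩
  have hw' := (emb_ne _).1 ((mulVec_GL_ne _ _).1 hw)
  refine ⟨g.1 *ᵥ w, (mulVec_GL_ne _ _).2 ((emb_ne _).2 ((mulVec_GL_ne _ _).2 hw')), ?_⟩
  rw [Projectivization.mk_eq_mk_iff']
  refine ⟨l, ?_⟩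
  rw [Units.val_mul, ← Matrix.mulVec_mulVec, sg_mulVec, Matrix.mulVec_smul]

lemma plane_mul_sg (M : GL (Fin 3) K) (p : Kˣ × GL (Fin 3) F) :
    plane F (M * sg F K p) = plane F M := by
  apply (plane_mul_sg_le M p).antisymm
  have := plane_mul_sg_le (M * sg F K p) p⁻¹
  rwa [mul_assoc, ← map_mul, mul_inv_cancel, map_one, mul_one] at this

lemma exists_sg (M M0 : GL (Fin 3) K) (h : plane F M = plane F M0) :
    ∃ p, M = M0 * sg F K p := by
  set H := M0⁻¹ * M with hH
  have hM : M = M0 * H := by rw [hH, mul_inv_cancel_left]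
  have key : ∀ w : Fin 3 → F, w ≠ 0 → ∃ (a : K) (v : Fin 3 → F), H.1 *ᵥ emb F K w = a • emb F K v := by
    intro w hw
    have h1 : M.1 *ᵥ emb F K w ≠ 0 := (mulVec_GL_ne _ _).2 ((emb_ne _).2 hw)
    have h2 : Projectivization.mk K _ h1 ∈ plane F M0 := by
      rw [← h]; exact ⟨w, h1, rfl⟩
    obtain ⟨v, hv, h3⟩ := h2
    rw [Projectivization.mk_eq_mk_iff'] at h3
    obtain ⟨a, ha⟩ := h3
    refine ⟨a, v, ?_⟩
    rw [hH, Units.val_mul, ← Matrix.mulVec_mulVec, ← ha, Matrix.mulVec_smul, Matrix.mulVec_mulVec,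
      ← Units.val_mul, inv_mul_cancel]
    simp
  have k1 : ∀ j : Fin 3, ∃ (a : K) (v : Fin 3 → F), ∀ i, H.1 i j = a * algebraMap F K (v i) := by
    intro j
    obtain ⟨a, v, hav⟩ := key (Pi.single j 1) (by simp)
    refine ⟨a, v, fun i => ?_⟩
    have : emb F K (Pi.single j 1) = Pi.single j 1 := by
      ext k
      by_cases hk : k = j
      · subst hk; simp [emb]
      · simp [emb, hk]
    rw [this] at hav
    simpa [emb] using congrFun hav i
  choose a v hav using k1
  obtain ⟨μ, u, hu⟩ := key (fun _ => 1) (by intro h; simpa using congrFun h 0)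
  let V : Matrix (Fin 3) (Fin 3) F := Matrix.of fun i j => v j i
  have hHV : H.1 = V.map (algebraMap F K) * Matrix.diagonal a := by
    ext i j
    simp [V, Matrix.mul_diagonal, hav, mul_comm]
  have hdetH : H.1.det ≠ 0 := (H.isUnit.map Matrix.detMonoidHom).ne_zero
  have hmapdet : ∀ A : Matrix (Fin 3) (Fin 3) F, (A.map (algebraMap F K)).det = algebraMap F K A.det :=
    fun A => ((algebraMap F K).map_det A).symm
  have hV : V.det ≠ 0 := by
    intro h0
    apply hdetH
    rw [hHV, Matrix.det_mul, hmapdet, h0]; simp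
  have hVi : IsUnit V.det := isUnit_iff_ne_zero.2 hV
  -- the coefficients
  have ha : V.map (algebraMap F K) *ᵥ a = μ • emb F K u := by
    rw [← hu, hHV, ← Matrix.mulVec_mulVec]
    congr 1
    ext i
    simp [Matrix.mulVec_diagonal, emb]
  have ha' : a = μ • emb F K (V⁻¹ *ᵥ u) := by
    rw [emb_mulVec, ← Matrix.mulVec_smul, ← ha, Matrix.mulVec_mulVec, ← Matrix.map_mul,
      Matrix.nonsing_inv_mul _ hVi]
    simp
  set c := V⁻¹ *ᵥ u with hc
  have hHg : H.1 = μ • ((V * Matrix.diagonal c).map (algebraMap F K)) := by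
    rw [hHV]
    ext i j
    simp only [Matrix.mul_diagonal, Matrix.map_apply, Matrix.smul_apply, smul_eq_mul, map_mul]
    rw [ha']
    simp [emb]; ring
  have hd : μ ^ 3 * algebraMap F K (V * Matrix.diagonal c).det ≠ 0 := by
    rw [← hmapdet]
    intro h0
    apply hdetH
    rw [hHg, Matrix.det_smul]; simpa using h0
  have hμ : μ ≠ 0 := by rintro rfl; simp at hd
  have hg : (V * Matrix.diagonal c).det ≠ 0 := by intro h0; rw [h0] at hd; simp at hd
  refine ⟨(Units.mk0 μ hμ, GeneralLinearGroup.mkOfDetNeZero _ hg), ?_⟩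
  rw [hM]
  congr 1
  apply Units.ext
  rw [hHg]
  ext i j
  simp [sg, GeneralLinearGroup.mkOfDetNeZero]

lemma card_sg_range [Fintype F] [Fintype K] :
    Nat.card (sg F K).range * (Fintype.card F - 1) =
      (Fintype.card K - 1) * Nat.card (GL (Fin 3) F) := by
  classical
  have hker : Nat.card (sg F K).ker = Fintype.card F - 1 := by
    rw [← Fintype.card_units, ← Nat.card_eq_fintype_card]
    symm
    refine Nat.card_congr (Equiv.ofBijective
      (fun c : Fˣ => ⟨(Units.map (algebraMap F K) c, GeneralLinearGroup.scalar (Fin 3) c⁻¹), ?_⟩)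
      ⟨?_, ?_⟩)
    · rw [MonoidHom.mem_ker]
      show GeneralLinearGroup.scalar (Fin 3) _ * GeneralLinearGroup.map _ _ = 1
      rw [GeneralLinearGroup.map_scalar, ← map_mul]
      erw [← map_mul]
      rw [mul_inv_cancel]
      simp
    · intro c d hcd
      simp only [Subtype.mk.injEq, Prod.mk.injEq] at hcd
      apply Units.ext
      have := congrArg Units.val hcd.1
      exact (algebraMap F K).injective this
    · rintro ⟨⟨l, g⟩, h⟩
      rw [MonoidHom.mem_ker] at h
      have h1 : ∀ i j, l.1 * algebraMap F K (g.1 i j) = (1 : Matrix (Fin 3) (Fin 3) K) i j := by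
        intro i j
        have := congrArg (fun A : GL (Fin 3) K => A.1 i j) h
        simpa [sg] using this
      have h00 := h1 0 0
      simp only [Matrix.one_apply_eq] at h00
      have hg0 : g.1 0 0 ≠ 0 := by intro h0; rw [h0] at h00; simp at h00
      refine ⟨(Units.mk0 _ hg0)⁻¹, ?_⟩
      simp only [Subtype.mk.injEq, Prod.mk.injEq]
      constructor
      · apply Units.ext
        have : l.1 = (algebraMap F K (g.1 0 0))⁻¹ := eq_inv_of_mul_eq_one_left h00
        rw [this]
        simp
      · rw [inv_inv]
        apply Units.ext
        ext i j
        apply (algebraMap F K).injective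
        apply mul_left_cancel₀ l.ne_zero
        rw [h1 i j]
        by_cases hij : i = j
        · subst hij; simpa using h00
        · simp [hij]
  have h1 := Subgroup.card_mul_index (sg F K).ker
  rw [Subgroup.index_ker, hker, Nat.card_prod, Nat.card_eq_fintype_card (α := Kˣ),
    Fintype.card_units] at h1
  rw [← h1, mul_comm]

lemma card_fiber [Finite F] [Finite K] (M0 : GL (Fin 3) K) :
    Nat.card {M : GL (Fin 3) K // plane F M = plane F M0} = Nat.card (sg F K).range := by
  symm
  refine Nat.card_congr ((Equiv.mulLeft M0).subtypeEquiv ?_)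
  intro A
  simp only [Equiv.coe_mulLeft]
  constructor
  · rintro ⟨p, rfl⟩; exact plane_mul_sg M0 p
  · intro h
    obtain ⟨p, hp⟩ := exists_sg _ _ h
    exact ⟨p, (mul_left_cancel hp).symm⟩

end

open Matrix in
lemma line_functional {K : Type*} [Field K] (W : Submodule K (Fin 3 → K))
    (hW : Module.finrank K W = 2) : ∃ φ : Fin 3 → K, φ ≠ 0 ∧ ∀ x, x ∈ W ↔ φ ⬝ᵥ x = 0 := by
  have hlt : W < ⊤ := by
    rw [lt_top_iff_ne_top]
    rintro rfl
    rw [finrank_top] at hW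
    simp at hW
  obtain ⟨f, hf, hle⟩ := Submodule.exists_le_ker_of_lt_top W hlt
  have hr : Module.finrank K (LinearMap.ker f) = 2 := by
    have h1 := LinearMap.finrank_range_add_finrank_ker f
    have h2 : LinearMap.range f = ⊤ := LinearMap.range_eq_top.2 (LinearMap.surjective hf)
    rw [h2, finrank_top] at h1
    simp at h1
    omega
  have hWk : W = LinearMap.ker f := Submodule.eq_of_le_of_finrank_eq hle (by rw [hW, hr])
  have hfx : ∀ x, f x = (fun i => f (Pi.single i 1)) ⬝ᵥ x := by
    intro x
    rw [LinearMap.pi_apply_eq_sum_univ f x]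
    simp only [dotProduct, smul_eq_mul]
    refine Finset.sum_congr rfl fun i _ => ?_
    rw [mul_comm]
    congr 2
    ext j
    simp [Pi.single_apply, eq_comm]
  refine ⟨fun i => f (Pi.single i 1), ?_, ?_⟩
  · intro h
    apply hf
    refine LinearMap.ext fun x => ?_
    rw [hfx x, h]
    simp
  · intro x
    rw [hWk, LinearMap.mem_ker, hfx]

open Matrix in
lemma tangent_iff {F K : Type*} [Field F] [Field K] [Algebra F K] (φ : Fin 3 → K)
    (W : Submodule K (Fin 3 → K)) (hφ : ∀ x, x ∈ W ↔ φ ⬝ᵥ x = 0) (M : GL (Fin 3) K) :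
    (∃ T : PGPoint K, plane F M ∩ {P : PGPoint K | P.submodule ≤ W} = {T}) ↔
      φ ᵥ* M.1 ∈ RankTwo F K := by
  have hne : ∀ w : Fin 3 → F, M.1 *ᵥ emb F K w ≠ 0 ↔ w ≠ 0 := fun w => by
    rw [mulVec_GL_ne, emb_ne]
  have hmem : ∀ (w : Fin 3 → F) (h : M.1 *ᵥ emb F K w ≠ 0),
      (Projectivization.mk K _ h).submodule ≤ W ↔
        Fintype.linearCombination F (φ ᵥ* M.1) w = 0 := by
    intro w h
    rw [Projectivization.submodule_mk, Submodule.span_singleton_le_iff_mem, hφ,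
      Matrix.dotProduct_mulVec, Fintype.linearCombination_apply]
    simp only [dotProduct, emb, Algebra.smul_def, mul_comm]
  have hsm : ∀ (c : F) (w : Fin 3 → F), emb F K (c • w) = algebraMap F K c • emb F K w := by
    intro c w; ext i; simp [emb]
  constructor
  · rintro ⟨T, hT⟩
    have hT' : T ∈ plane F M ∩ {P : PGPoint K | P.submodule ≤ W} := by rw [hT]; rfl
    obtain ⟨⟨w, hw, rfl⟩, hTW⟩ := hT'
    have hTW' := (hmem w hw).1 hTW
    have hw' := (hne w).1 hw
    refine ⟨w, hw', fun x => ⟨fun hx => ?_, ?_⟩⟩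
    · by_cases hx0 : x = 0
      · exact ⟨0, by simp [hx0]⟩
      have hxM := (hne x).2 hx0
      have : Projectivization.mk K _ hxM ∈
          plane F M ∩ {P : PGPoint K | P.submodule ≤ W} :=
        ⟨⟨x, hxM, rfl⟩, (hmem x hxM).2 hx⟩
      rw [hT, Set.mem_singleton_iff, Projectivization.mk_eq_mk_iff'] at this
      obtain ⟨a, ha⟩ := this
      have ha' : a • emb F K w = emb F K x := by
        have := congrArg ((M⁻¹).1 *ᵥ ·) ha
        simpa only [Matrix.mulVec_smul, Matrix.mulVec_mulVec, ← Units.val_mul, inv_mul_cancel,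
          Units.val_one, Matrix.one_mulVec] using this
      obtain ⟨i, hi⟩ := Function.ne_iff.1 hw'
      have hi' : algebraMap F K (w i) ≠ 0 := by simpa using hi
      have hac : a = algebraMap F K (x i / w i) := by
        have := congrFun ha' i
        simp only [Pi.smul_apply, emb, smul_eq_mul] at this
        rw [map_div₀, ← this, mul_div_cancel_right₀ _ hi']
      refine ⟨x i / w i, ?_⟩
      funext j
      apply (algebraMap F K).injective
      have := congrFun ha' j
      simp only [Pi.smul_apply, emb, smul_eq_mul] at this
      rw [← this, hac]
      simp
    · rintro ⟨c, rfl⟩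
      rw [map_smul, hTW', smul_zero]
  · rintro ⟨w, hw, h⟩
    have hwM := (hne w).2 hw
    refine ⟨Projectivization.mk K _ hwM, ?_⟩
    ext P
    rw [Set.mem_singleton_iff]
    constructor
    · rintro ⟨⟨x, hx, rfl⟩, hPW⟩
      obtain ⟨c, rfl⟩ := (h x).1 ((hmem x hx).1 hPW)
      rw [Projectivization.mk_eq_mk_iff']
      refine ⟨algebraMap F K c, ?_⟩
      rw [hsm, Matrix.mulVec_smul]
    · rintro rfl
      exact ⟨⟨w, hwM, rfl⟩, (hmem w hwM).2 ((h w).2 ⟨1, by simp⟩)⟩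

lemma arith (q X h N A : ℕ) (hq : 2 ≤ q)
    (h1 : A * (q ^ 9 - 1) = ((q ^ 9 - 1) * (q ^ 9 - q ^ 3) * (q ^ 9 - q ^ 6)) * N)
    (h2 : N * (q - 1) = (q ^ 3 - 1) * ((q ^ 3 - 1) * (q ^ 3 - q)))
    (h3 : h * (q - 1) = (q ^ 3 - 1) * ((q ^ 3 - 1) * (q ^ 3 - q) * (q ^ 3 - q ^ 2)))
    (h4 : A = X * h) :
    X = q ^ 7 * (q ^ 3 - 1) * (q ^ 3 + 1) * (q ^ 2 + q + 1) := by
  have hp : ∀ a b, a ≤ b → q ^ a ≤ q ^ b := fun a b hab => Nat.pow_le_pow_right (by omega) hab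
  have hp1 : ∀ b, 1 ≤ q ^ b := fun b => Nat.one_le_pow _ _ (by omega)
  have e31 : q ≤ q ^ 3 := by simpa using hp 1 3 (by norm_num)
  zify [hp1 9, hp1 3, hp 3 9 (by norm_num), hp 6 9 (by norm_num), hp 2 3 (by norm_num), e31,
    (by omega : 1 ≤ q)] at h1 h2 h3 h4 ⊢
  have hq' : (2 : ℤ) ≤ q := by exact_mod_cast hq
  generalize (q : ℤ) = t at *
  have p0 : t ≠ 0 := by omega
  have p1 : t - 1 ≠ 0 := by omega
  have p1' : t + 1 ≠ 0 := by omega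
  have p2 : t ^ 2 + t + 1 ≠ 0 := by positivity
  have p3 : t ^ 3 - 1 ≠ 0 := by
    rw [show t ^ 3 - 1 = (t - 1) * (t ^ 2 + t + 1) by ring]; exact mul_ne_zero p1 p2
  have p9 : t ^ 9 - 1 ≠ 0 := by
    rw [show t ^ 9 - 1 = (t ^ 3 - 1) * (t ^ 6 + t ^ 3 + 1) by ring]
    exact mul_ne_zero p3 (by positivity)
  have h1' : (A : ℤ) = (t ^ 9 - t ^ 3) * (t ^ 9 - t ^ 6) * N := by
    apply mul_right_cancel₀ p9; rw [h1]; ring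
  have hh : (h : ℤ) * (t - 1) ≠ 0 := by
    rw [h3, show t ^ 3 - t = t * (t - 1) * (t + 1) by ring,
      show t ^ 3 - t ^ 2 = t ^ 2 * (t - 1) by ring]
    positivity
  apply mul_right_cancel₀ hh
  calc (X : ℤ) * (h * (t - 1)) = A * (t - 1) := by rw [h4]; ring
    _ = (t ^ 9 - t ^ 3) * (t ^ 9 - t ^ 6) * (N * (t - 1)) := by rw [h1']; ring
    _ = _ := by rw [h2, h3]; ring

/-- the number of order-`q`-subplanes of `PG(2,q³)` tangent to a given
line `ℓ` is `q⁷(q³−1)(q³+1)(q²+q+1)`. -/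
theorem statement7 (q : ℕ) (F K : Type) [Field F] [Field K] [Fintype F] [Fintype K]
    [Algebra F K] (hF : Fintype.card F = q) (hK : Fintype.card K = q ^ 3)
    (ℓ : Set (PGPoint K)) (hℓ : IsLine ℓ) :
    {S : Set (PGPoint K) | IsSubplane F S ∧ ∃ T : PGPoint K, S ∩ ℓ = {T}}.ncard =
      q ^ 7 * (q ^ 3 - 1) * (q ^ 3 + 1) * (q ^ 2 + q + 1) := by
  obtain ⟨W, hW, rfl⟩ := hℓ
  obtain ⟨φ, hφ0, hφ⟩ := line_functional W hW
  have hq : 2 ≤ q := by rw [← hF]; exact Fintype.one_lt_card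
  have hr : Module.finrank F K = 3 := by
    have h := Module.card_eq_pow_finrank (K := F) (V := K)
    rw [hF, hK] at h
    exact (Nat.pow_right_injective hq h).symm
  have h4 := dc (fun (M : GL (Fin 3) K) (S : Set (PGPoint K)) => plane F M = S)
    {M : GL (Fin 3) K | Matrix.vecMul φ M.1 ∈ RankTwo F K}
    {S : Set (PGPoint K) | IsSubplane F S ∧ ∃ T : PGPoint K,
      S ∩ {P : PGPoint K | P.submodule ≤ W} = {T}} 1 (Nat.card (sg F K).range) ?_ ?_
  · have h1 := card_row φ hφ0 (RankTwo F K) (by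
      rintro _ ⟨w, hw, h⟩ rfl
      obtain ⟨g, hg⟩ : ∃ x : Fin 3 → F, ∀ c : F, x ≠ c • w := by
        by_contra! hcon
        have h1 : Module.finrank F (Fin 3 → F) ≤ 1 :=
          finrank_le_one w (fun x => by obtain ⟨c, hc⟩ := hcon x; exact ⟨c, hc.symm⟩)
        simp at h1
      obtain ⟨c, hc⟩ := (h g).1 (by simp [Fintype.linearCombination_apply])
      exact hg c hc)
    have h2 := card_rankTwo hr
    have h3 := card_sg_range (F := F) (K := K)
    rw [Matrix.card_GL_field] at h1 h3
    rw [← Nat.card_coe_set_eq]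
    rw [mul_one] at h4
    generalize Nat.card (sg F K).range = h at h3 h4
    generalize Nat.card (RankTwo F K) = N at h1 h2
    generalize Nat.card {M : GL (Fin 3) K | Matrix.vecMul φ M.1 ∈ RankTwo F K} = A at h1 h4
    refine arith q _ h N A hq ?_ ?_ ?_ h4
    · simpa [Fin.prod_univ_three, hK, ← pow_mul] using h1
    · simpa [hF] using h2
    · simpa [Fin.prod_univ_three, hF, hK] using h3
  · intro M hM
    rw [Nat.card_eq_one_iff_unique]
    refine ⟨⟨?_⟩, ⟨⟨plane F M, ⟨(isSubplane_iff _).2 ⟨M, rfl⟩, (tangent_iff φ W hφ M).2 hM⟩, rfl⟩⟩⟩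
    rintro ⟨a, _, ha⟩ ⟨b, _, hb⟩
    exact Subtype.ext (ha.symm.trans hb)
  · rintro S ⟨hS, hT⟩
    obtain ⟨M0, rfl⟩ := (isSubplane_iff _).1 hS
    rw [← card_fiber M0]
    refine Nat.card_congr (Equiv.subtypeEquivRight ?_)
    intro M
    refine ⟨fun h => h.2, fun h => ⟨?_, h⟩⟩
    refine (tangent_iff φ W hφ M).1 ?_
    rw [h]; exact hT

end TangentSplashPaper
end

section
/- Let q be a prime power and let S_T be a tangent splash of ℓ∞ in PG(2,q³) with centre T. The number of order-q-subplanes of PG(2,q³) tangent to ℓ∞ whose tangent splash equals S_T is q⁶(q³−1). -/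
namespace TangentSplashPaper

open Projectivization

/-- `v` is a vector of homogeneous coordinates of `P`. -/
def Rp {K : Type*} [Field K] (P : PGPoint K) (v : Fin 3 → K) : Prop :=
  ∃ h : v ≠ 0, Projectivization.mk K v h = P

/-- Linear independence of three vectors, spelled out. -/
def Ind {K : Type*} [Field K] (a b c : Fin 3 → K) : Prop :=
  ∀ x y z : K, x • a + y • b + z • c = 0 → x = 0 ∧ y = 0 ∧ z = 0

/-- The subplane spanned by three vectors over `F`. -/
def pl (F : Type*) {K : Type*} [Field F] [Field K] [Algebra F K] (a b c : Fin 3 → K) :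
    Set (PGPoint K) :=
  {P | ∃ x y z : F, Rp P (algebraMap F K x • a + algebraMap F K y • b + algebraMap F K z • c)}

/-- The normal form of a tangent splash. -/
def spl (F : Type*) {K : Type*} [Field F] [Field K] [Algebra F K] (t w : Fin 3 → K) (r : K) :
    Set (PGPoint K) :=
  {P | Rp P t ∨ ∃ x y : F, Rp P (w + (algebraMap F K x + algebraMap F K y * r) • t)}

section
variable {F K : Type*} [Field F] [Field K] [Algebra F K]

lemma Rp.unique {P : PGPoint K} {v v' : Fin 3 → K} (h : Rp P v) (h' : Rp P v') :
    ∃ k : K, k ≠ 0 ∧ v' = k • v := by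
  obtain ⟨h1, e1⟩ := h
  obtain ⟨h2, e2⟩ := h'
  rw [← e1, Projectivization.mk_eq_mk_iff'] at e2
  obtain ⟨a, ha⟩ := e2
  refine ⟨a, ?_, ha.symm⟩
  rintro rfl
  simp at ha
  exact h2 ha.symm

lemma Rp.smul {P : PGPoint K} {v : Fin 3 → K} (h : Rp P v) {k : K} (hk : k ≠ 0) :
    Rp P (k • v) := by
  obtain ⟨h1, e1⟩ := h
  refine ⟨smul_ne_zero hk h1, ?_⟩
  rw [← e1, Projectivization.mk_eq_mk_iff']
  exact ⟨k, rfl⟩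

lemma Rp.exists (P : PGPoint K) : ∃ v, Rp P v := ⟨P.rep, P.rep_nonzero, P.mk_rep⟩

lemma Rp.mk {v : Fin 3 → K} (h : v ≠ 0) : Rp (Projectivization.mk K v h) v := ⟨h, rfl⟩

lemma Rp.eq {P Q : PGPoint K} {v : Fin 3 → K} (h : Rp P v) (h' : Rp Q v) : P = Q := by
  obtain ⟨h1, e1⟩ := h
  obtain ⟨h2, e2⟩ := h'
  rw [← e1, ← e2]

lemma Rp.ne {P : PGPoint K} {v : Fin 3 → K} (h : Rp P v) : v ≠ 0 := h.1

lemma Rp.linf {P : PGPoint K} {v : Fin 3 → K} (h : Rp P v) : P ∈ linf K ↔ v 2 = 0 := by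
  obtain ⟨k, hk, e⟩ := h.unique ⟨P.rep_nonzero, P.mk_rep⟩
  simp [TangentSplashPaper.linf, e, hk]

lemma Rp.sub {P : PGPoint K} {v : Fin 3 → K} (h : Rp P v) (W : Submodule K (Fin 3 → K)) :
    P.submodule ≤ W ↔ v ∈ W := by
  obtain ⟨h1, e1⟩ := h
  rw [← e1, Projectivization.submodule_mk, Submodule.span_singleton_le_iff_mem]

lemma line_iff {P Q X : PGPoint K} {p q x : Fin 3 → K} (hP : Rp P p) (hQ : Rp Q q)
    (hX : Rp X x) (hne : P ≠ Q) :
    (∃ ℓ : Set (PGPoint K), IsLine ℓ ∧ P ∈ ℓ ∧ Q ∈ ℓ ∧ X ∈ ℓ) ↔ ∃ k l : K, x = k • p + l • q := by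
  have hli : LinearIndependent K ![p, q] := by
    rw [LinearIndependent.pair_iff' hP.ne]
    intro a ha
    apply hne
    have : a ≠ 0 := by
      rintro rfl
      exact hQ.ne (by simpa using ha.symm)
    have h2 := hP.smul this
    rw [ha] at h2
    exact h2.eq hQ
  have hfr : Module.finrank K (Submodule.span K ({p, q} : Set (Fin 3 → K))) = 2 := by
    have := finrank_span_eq_card hli
    have hr : Set.range ![p, q] = {p, q} := by
      ext y
      simp [eq_comm, or_comm]
    rw [hr] at this
    simpa using this
  constructor
  · rintro ⟨ℓ, ⟨W, hW, rfl⟩, h1, h2, h3⟩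
    simp only [Set.mem_ofPred_eq, hP.sub, hQ.sub, hX.sub] at h1 h2 h3
    have hle : Submodule.span K ({p, q} : Set (Fin 3 → K)) ≤ W := by
      rw [Submodule.span_le]
      rintro y (rfl | rfl) <;> assumption
    have := Submodule.eq_of_le_of_finrank_eq hle (by rw [hfr, hW])
    rw [← this, Submodule.mem_span_pair] at h3
    obtain ⟨k, l, e⟩ := h3
    exact ⟨k, l, e.symm⟩
  · rintro ⟨k, l, e⟩
    refine ⟨_, ⟨_, hfr, rfl⟩, ?_, ?_, ?_⟩
    · simp only [Set.mem_ofPred_eq, hP.sub]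
      exact Submodule.subset_span (by simp)
    · simp only [Set.mem_ofPred_eq, hQ.sub]
      exact Submodule.subset_span (by simp)
    · simp only [Set.mem_ofPred_eq, hX.sub]
      rw [Submodule.mem_span_pair]
      exact ⟨k, l, e.symm⟩

lemma Rp.hmap {P : PGPoint K} {v : Fin 3 → K} (h : Rp P v)
    (f : (Fin 3 → K) ≃ₗ[K] (Fin 3 → K)) : Rp (hmap f P) (f v) := by
  obtain ⟨h1, e1⟩ := h
  refine ⟨by simpa using h1, ?_⟩
  rw [← e1]
  rfl

lemma image_eq (f : (Fin 3 → K) ≃ₗ[K] (Fin 3 → K)) (a b c : Fin 3 → K)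
    (hf : ∀ v, f v = v 0 • a + v 1 • b + v 2 • c) : hmap f '' basePlane F K = pl F a b c := by
  ext P
  constructor
  · rintro ⟨Q, ⟨v, hv, rfl, hr⟩, rfl⟩
    obtain ⟨x, hx⟩ := hr 0
    obtain ⟨y, hy⟩ := hr 1
    obtain ⟨z, hz⟩ := hr 2
    refine ⟨x, y, z, ?_⟩
    have := (Rp.mk hv).hmap f
    rwa [hf, ← hx, ← hy, ← hz] at this
  · rintro ⟨x, y, z, h⟩
    have e := hf ![algebraMap F K x, algebraMap F K y, algebraMap F K z]
    simp only [Matrix.cons_val] at e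
    have hv : ![algebraMap F K x, algebraMap F K y, algebraMap F K z] ≠ 0 := by
      intro h0
      rw [h0, map_zero] at e
      exact h.ne e.symm
    refine ⟨Projectivization.mk K _ hv, ⟨_, hv, rfl, ?_⟩, ?_⟩
    · intro i
      fin_cases i <;> simp
    · have := (Rp.mk hv).hmap f
      rw [e] at this
      exact this.eq h

lemma isSubplane_iff_s10 (π : Set (PGPoint K)) :
    IsSubplane F π ↔ ∃ a b c : Fin 3 → K, Ind a b c ∧ π = pl F a b c := by
  constructor
  · rintro ⟨f, rfl⟩
    have hf : ∀ v : Fin 3 → K, f v = v 0 • f ![1,0,0] + v 1 • f ![0,1,0] + v 2 • f ![0,0,1] := by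
      intro v
      rw [← map_smul, ← map_smul, ← map_smul, ← map_add, ← map_add]
      congr 1
      ext i
      fin_cases i <;> simp
    refine ⟨_, _, _, ?_, image_eq f _ _ _ hf⟩
    intro x y z h
    have := hf ![x, y, z]
    simp only [Matrix.cons_val] at this
    rw [h] at this
    have h0 := f.map_eq_zero_iff.1 this
    exact ⟨by simpa using congrFun h0 0, by simpa using congrFun h0 1, by simpa using congrFun h0 2⟩
  · rintro ⟨a, b, c, h, rfl⟩
    let g : (Fin 3 → K) →ₗ[K] (Fin 3 → K) :=
      { toFun := fun v => v 0 • a + v 1 • b + v 2 • c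
        map_add' := by intro x y; simp only [Pi.add_apply]; module
        map_smul' := by intro x y; simp only [Pi.smul_apply, smul_eq_mul, RingHom.id_apply]; module }
    have hg : Function.Injective g := by
      rw [injective_iff_map_eq_zero]
      intro v hv
      obtain ⟨h0, h1, h2⟩ := h _ _ _ hv
      ext i
      fin_cases i <;> assumption
    exact ⟨LinearEquiv.ofInjectiveEndo g hg, (image_eq _ a b c (fun v => rfl)).symm⟩

/-- Invertible change of basis over `F`. -/
lemma pl_le (a b c a' b' c' : Fin 3 → K)
    (ha : ∃ x y z : F, a = algebraMap F K x • a' + algebraMap F K y • b' + algebraMap F K z • c')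
    (hb : ∃ x y z : F, b = algebraMap F K x • a' + algebraMap F K y • b' + algebraMap F K z • c')
    (hc : ∃ x y z : F, c = algebraMap F K x • a' + algebraMap F K y • b' + algebraMap F K z • c') :
    pl F a b c ⊆ pl F a' b' c' := by
  obtain ⟨x1, y1, z1, rfl⟩ := ha
  obtain ⟨x2, y2, z2, rfl⟩ := hb
  obtain ⟨x3, y3, z3, rfl⟩ := hc
  rintro P ⟨x, y, z, h⟩
  refine ⟨x * x1 + y * x2 + z * x3, x * y1 + y * y2 + z * y3, x * z1 + y * z2 + z * z3, ?_⟩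
  convert h using 1
  simp only [map_add, map_mul]
  module

lemma pl_smul (a b c : Fin 3 → K) {k : K} (hk : k ≠ 0) :
    pl F (k • a) (k • b) (k • c) = pl F a b c := by
  ext P
  constructor
  · rintro ⟨x, y, z, h⟩
    refine ⟨x, y, z, ?_⟩
    convert h.smul (inv_ne_zero hk) using 1
    match_scalars <;> field_simp
  · rintro ⟨x, y, z, h⟩
    refine ⟨x, y, z, ?_⟩
    convert h.smul hk using 1
    module

end

section
variable {F K : Type*} [Field F] [Field K] [Algebra F K]

lemma first_aux {a b c t : Fin 3 → K} {T : PGPoint K} (h : Ind a b c) {x y z : F} (hx : x ≠ 0)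
    (hT : Rp T (algebraMap F K x • a + algebraMap F K y • b + algebraMap F K z • c))
    (ht : Rp T t) : ∃ b' c', Ind t b' c' ∧ pl F a b c = pl F t b' c' := by
  obtain ⟨k, hk, e⟩ := hT.unique ht
  have hx' : algebraMap F K x ≠ 0 := by simpa using hx
  refine ⟨k • b, k • c, ?_, ?_⟩
  · intro p q r h0
    rw [e] at h0
    obtain ⟨h1, h2, h3⟩ := h (p * k * algebraMap F K x) (p * k * algebraMap F K y + q * k)
      (p * k * algebraMap F K z + r * k) (by rw [← h0]; module)
    have hp : p = 0 := by simpa [hk, hx] using h1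
    subst hp
    simpa [hk] using And.intro h2 h3
  · rw [e, pl_smul _ _ _ hk]
    apply Set.Subset.antisymm
    · refine pl_le _ _ _ _ _ _ ⟨x⁻¹, -(x⁻¹ * y), -(x⁻¹ * z), ?_⟩ ⟨0, 1, 0, by simp⟩
        ⟨0, 0, 1, by simp⟩
      simp only [map_neg, map_mul, map_inv₀]
      match_scalars <;> field_simp <;> ring
    · exact pl_le _ _ _ _ _ _ ⟨x, y, z, rfl⟩ ⟨0, 1, 0, by simp⟩ ⟨0, 0, 1, by simp⟩

lemma pl_first {a b c t : Fin 3 → K} {T : PGPoint K} (h : Ind a b c) (hT : T ∈ pl F a b c)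
    (ht : Rp T t) : ∃ b' c', Ind t b' c' ∧ pl F a b c = pl F t b' c' := by
  obtain ⟨x, y, z, hr⟩ := hT
  by_cases hx : x = 0
  · by_cases hy : y = 0
    · by_cases hz : z = 0
      · exact absurd (by simp [hx, hy, hz]) hr.ne
      · have h' : Ind c b a := by
          intro p q r h0
          obtain ⟨h1, h2, h3⟩ := h r q p (by rw [← h0]; module)
          exact ⟨h3, h2, h1⟩
        obtain ⟨b', c', h1, h2⟩ := first_aux (F := F) (x := z) (y := y) (z := x) h' hz
          (by convert hr using 1; module) ht
        refine ⟨b', c', h1, ?_⟩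
        rw [← h2]
        apply Set.Subset.antisymm
        · exact pl_le _ _ _ _ _ _ ⟨0, 0, 1, by simp⟩ ⟨0, 1, 0, by simp⟩ ⟨1, 0, 0, by simp⟩
        · exact pl_le _ _ _ _ _ _ ⟨0, 0, 1, by simp⟩ ⟨0, 1, 0, by simp⟩ ⟨1, 0, 0, by simp⟩
    · have h' : Ind b a c := by
        intro p q r h0
        obtain ⟨h1, h2, h3⟩ := h q p r (by rw [← h0]; module)
        exact ⟨h2, h1, h3⟩
      obtain ⟨b', c', h1, h2⟩ := first_aux (F := F) (x := y) (y := x) (z := z) h' hy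
        (by convert hr using 1; module) ht
      refine ⟨b', c', h1, ?_⟩
      rw [← h2]
      apply Set.Subset.antisymm
      · exact pl_le _ _ _ _ _ _ ⟨0, 1, 0, by simp⟩ ⟨1, 0, 0, by simp⟩ ⟨0, 0, 1, by simp⟩
      · exact pl_le _ _ _ _ _ _ ⟨0, 1, 0, by simp⟩ ⟨1, 0, 0, by simp⟩ ⟨0, 0, 1, by simp⟩
  · exact first_aux h hx hr ht

/-- Data of a tangent splash in normal form. -/
def NF (F : Type*) {K : Type*} [Field F] [Field K] [Algebra F K] (t w : Fin 3 → K) (r : K) :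
    Prop :=
  t 2 = 0 ∧ w 2 = 0 ∧ (∀ x z : K, x • t + z • w = 0 → x = 0 ∧ z = 0) ∧
    ∀ x : F, algebraMap F K x ≠ r

lemma normal_form {π : Set (PGPoint K)} {T : PGPoint K} {t : Fin 3 → K} (hπ : IsSubplane F π)
    (hT : π ∩ linf K = {T}) (ht : Rp T t) :
    ∃ u w r, NF F t w r ∧ u 2 ≠ 0 ∧ π = pl F t u (r • u - w) := by
  obtain ⟨a, b, c, hi, rfl⟩ := (isSubplane_iff_s10 π).1 hπ
  have hTm : T ∈ pl F a b c ∩ linf K := by rw [hT]; rfl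
  obtain ⟨u, v, hi, e⟩ := pl_first hi hTm.1 ht
  rw [e] at hT hTm ⊢
  have ht2 : t 2 = 0 := ht.linf.1 hTm.2
  -- no other points at infinity
  have key : ∀ x y : F, (algebraMap F K x • u + algebraMap F K y • v) 2 = 0 → x = 0 ∧ y = 0 := by
    intro x y h0
    by_contra hne
    have hnz : algebraMap F K x • u + algebraMap F K y • v ≠ 0 := by
      intro hz
      apply hne
      obtain ⟨-, h1, h2⟩ := hi 0 (algebraMap F K x) (algebraMap F K y) (by rw [← hz]; module)
      simpa using And.intro h1 h2
    have hR := Rp.mk hnz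
    have hmem : Projectivization.mk K _ hnz ∈ pl F t u v ∩ linf K := by
      refine ⟨⟨0, x, y, ?_⟩, hR.linf.2 h0⟩
      convert hR using 1
      simp
    rw [hT, Set.mem_singleton_iff] at hmem
    rw [hmem] at hR
    obtain ⟨k, hk, e⟩ := ht.unique hR
    obtain ⟨h1, -, -⟩ := hi k (-algebraMap F K x) (-algebraMap F K y)
      (by linear_combination (norm := module) -e)
    exact hk h1
  have hu : u 2 ≠ 0 := by
    intro h0
    have := (key 1 0 (by simp [h0])).1
    exact one_ne_zero this
  refine ⟨u, (v 2 / u 2) • u - v, v 2 / u 2, ⟨ht2, ?_, ?_, ?_⟩, hu, ?_⟩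
  · simp [hu]
  · intro x z h0
    obtain ⟨h1, h2, h3⟩ := hi x (z * (v 2 / u 2)) (-z) (by rw [← h0]; module)
    exact ⟨h1, by simpa using h3⟩
  · intro x hx
    have := (key x (-1) (by simp [hx, hu])).2
    simp at this
  · congr 1
    module

lemma NF.ind {t w u : Fin 3 → K} {r : K} (h : NF F t w r) (hu : u 2 ≠ 0) :
    Ind t u (r • u - w) := by
  intro x y z h0
  have h2 := congrFun h0 2
  simp only [Pi.add_apply, Pi.smul_apply, Pi.sub_apply, h.1, h.2.1, smul_eq_mul, Pi.zero_apply,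
    mul_zero, sub_zero, zero_add] at h2
  have h3 : y + z * r = 0 := by
    apply mul_right_cancel₀ hu
    linear_combination h2
  obtain ⟨h4, h5⟩ := h.2.2.1 x (-z) (by linear_combination (norm := module) h0 - h3 • u)
  have hz : z = 0 := by simpa using h5
  subst hz
  exact ⟨h4, by simpa using h3, rfl⟩

lemma NF.indep {t w : Fin 3 → K} {r : K} (h : NF F t w r) {x y : F}
    (h0 : algebraMap F K x + algebraMap F K y * r = 0) : x = 0 ∧ y = 0 := by
  have hy : y = 0 := by
    by_contra hy
    apply h.2.2.2 (-x / y)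
    have hy' : algebraMap F K y ≠ 0 := by simpa using hy
    rw [map_div₀, map_neg]
    field_simp
    linear_combination -h0
  subst hy
  exact ⟨by simpa using h0, rfl⟩

lemma NF.tne {t w : Fin 3 → K} {r : K} (h : NF F t w r) : t ≠ 0 := by
  rintro rfl
  exact one_ne_zero (h.2.2.1 1 0 (by simp)).1

lemma NF.tangent {t w u : Fin 3 → K} {r : K} (h : NF F t w r) (hu : u 2 ≠ 0)
    {T : PGPoint K} (hT : Rp T t) : pl F t u (r • u - w) ∩ linf K = {T} := by
  ext P
  constructor
  · rintro ⟨⟨x, y, z, hP⟩, hl⟩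
    have h2 := hP.linf.1 hl
    simp only [Pi.add_apply, Pi.smul_apply, Pi.sub_apply, h.1, h.2.1, smul_eq_mul,
      mul_zero, sub_zero, zero_add] at h2
    obtain ⟨rfl, rfl⟩ := h.indep (x := y) (y := z) (by
      apply mul_right_cancel₀ hu
      linear_combination h2)
    have hx : algebraMap F K x ≠ 0 := by
      intro h0
      exact hP.ne (by simp [h0])
    have := hT.smul hx
    exact Rp.eq hP (by simpa using this)
  · rintro rfl
    exact ⟨⟨1, 0, 0, by simpa using hT⟩, hT.linf.2 h.1⟩

lemma NF.splash {t w u : Fin 3 → K} {r : K} (h : NF F t w r) (hu : u 2 ≠ 0) :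
    splash (pl F t u (r • u - w)) = spl F t w r := by
  have hi := h.ind hu
  ext X
  constructor
  · rintro ⟨hX, P, Q, ⟨x0, x1, x2, hP⟩, ⟨y0, y1, y2, hQ⟩, hne, hl⟩
    obtain ⟨v, hv⟩ := Rp.exists X
    rw [line_iff hP hQ hv hne] at hl
    obtain ⟨k, l, e⟩ := hl
    have hv2 := hv.linf.1 hX
    rw [e] at hv2
    simp only [Pi.add_apply, Pi.smul_apply, Pi.sub_apply, h.1, h.2.1, smul_eq_mul,
      mul_zero, sub_zero, zero_add] at hv2
    have hA : k * (algebraMap F K x1 + algebraMap F K x2 * r) +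
        l * (algebraMap F K y1 + algebraMap F K y2 * r) = 0 := by
      apply mul_right_cancel₀ hu
      linear_combination hv2
    set A := algebraMap F K x1 + algebraMap F K x2 * r with hAd
    set B := algebraMap F K y1 + algebraMap F K y2 * r with hBd
    -- `(k, l)` is proportional to `(B, -A)`
    obtain ⟨m, hk, hl⟩ : ∃ m, k = m * B ∧ l = -(m * A) := by
      by_cases hA0 : A = 0
      · by_cases hB0 : B = 0
        · exfalso
          obtain ⟨rfl, rfl⟩ := h.indep hA0
          obtain ⟨rfl, rfl⟩ := h.indep hB0
          apply hne
          have hx : algebraMap F K x0 ≠ 0 := by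
            intro h0
            exact hP.ne (by simp [h0])
          have hy : algebraMap F K y0 ≠ 0 := by
            intro h0
            exact hQ.ne (by simp [h0])
          have := hP.smul (div_ne_zero hy hx)
          refine this.eq ?_
          convert hQ using 1
          match_scalars <;> field_simp <;> simp
        · refine ⟨k / B, by field_simp, ?_⟩
          rw [hA0] at hA ⊢
          simpa [hB0] using hA
      · refine ⟨-l / A, ?_, by field_simp⟩
        field_simp
        linear_combination hA
    have hm : m ≠ 0 := by
      rintro rfl
      apply hv.ne
      rw [e, hk, hl]
      simp
    have e2 : v = m • ((algebraMap F K (x1 * y2 - x2 * y1)) • w +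
        (algebraMap F K (y1 * x0 - x1 * y0) + algebraMap F K (y2 * x0 - x2 * y0) * r) • t) := by
      rw [e, hk, hl, hAd, hBd]
      simp only [map_sub, map_mul]
      module
    by_cases hD : x1 * y2 - x2 * y1 = 0
    · left
      rw [hD, map_zero, zero_smul, zero_add, smul_smul] at e2
      have hc : m * (algebraMap F K (y1 * x0 - x1 * y0) +
          algebraMap F K (y2 * x0 - x2 * y0) * r) ≠ 0 := by
        intro h0
        apply hv.ne
        rw [e2, h0, zero_smul]
      have := hv.smul (inv_ne_zero hc)
      rwa [e2, smul_smul, inv_mul_cancel₀ hc, one_smul] at this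
    · right
      have hD' : algebraMap F K (x1 * y2 - x2 * y1) ≠ 0 := by
        rwa [Ne, map_eq_zero_iff _ (algebraMap F K).injective]
      refine ⟨(y1 * x0 - x1 * y0) / (x1 * y2 - x2 * y1),
        (y2 * x0 - x2 * y0) / (x1 * y2 - x2 * y1), ?_⟩
      have := hv.smul (inv_ne_zero (mul_ne_zero hm hD'))
      convert this using 1
      rw [e2, map_div₀, map_div₀]
      generalize algebraMap F K (x1 * y2 - x2 * y1) = D at *
      match_scalars <;> field_simp
  · have hne : ∀ x y z : F, (x ≠ 0 ∨ y ≠ 0 ∨ z ≠ 0) →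
        algebraMap F K x • t + algebraMap F K y • u + algebraMap F K z • (r • u - w) ≠ 0 := by
      intro x y z hxyz h0
      have := hi _ _ _ h0
      simp only [map_eq_zero] at this
      tauto
    rintro (hX | ⟨x, y, hX⟩)
    · refine ⟨hX.linf.2 h.1, _, _, ⟨1, 0, 0, Rp.mk (hne 1 0 0 (by simp))⟩,
        ⟨0, 1, 0, Rp.mk (hne 0 1 0 (by simp))⟩, ?_, ?_⟩
      · intro h0
        have h1 := Rp.mk (hne 1 0 0 (by simp))
        rw [h0] at h1
        obtain ⟨k, hk, e⟩ := h1.unique (Rp.mk (hne 0 1 0 (by simp)))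
        have := (hi (-k) 1 0 (by simp at e; rw [e]; module)).2.1
        exact one_ne_zero this
      · rw [line_iff (Rp.mk (hne 1 0 0 (by simp))) (Rp.mk (hne 0 1 0 (by simp))) hX]
        · exact ⟨1, 0, by simp⟩
        · intro h0
          have h1 := Rp.mk (hne 1 0 0 (by simp))
          rw [h0] at h1
          obtain ⟨k, hk, e⟩ := h1.unique (Rp.mk (hne 0 1 0 (by simp)))
          have := (hi (-k) 1 0 (by simp at e; rw [e]; module)).2.1
          exact one_ne_zero this
    · have hP := Rp.mk (hne y 1 0 (by simp))
      have hQ := Rp.mk (hne (-x) 0 1 (by simp))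
      have hPQ : Projectivization.mk K _ (hne y 1 0 (by simp)) ≠
          Projectivization.mk K _ (hne (-x) 0 1 (by simp)) := by
        intro h0
        rw [h0] at hP
        obtain ⟨k, hk, e⟩ := hP.unique hQ
        simp only [map_one, map_zero] at e
        have := (hi (algebraMap F K (-x) - k * algebraMap F K y) (-k) 1
          (by linear_combination (norm := module) e)).2.2
        exact one_ne_zero this
      refine ⟨hX.linf.2 (by simp [h.1, h.2.1]), _, _, ⟨y, 1, 0, hP⟩, ⟨-x, 0, 1, hQ⟩, hPQ, ?_⟩
      rw [line_iff hP hQ hX hPQ]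
      refine ⟨r, -1, ?_⟩
      simp only [map_one, map_zero, map_neg]
      module

end

section
variable {F K : Type*} [Field F] [Field K] [Algebra F K]

lemma centre_aux {t w t0 w0 : Fin 3 → K} {r r0 k k' : K} (h : NF F t w r)
    (hsub : spl F t w r ⊆ spl F t0 w0 r0) (hk : k ≠ 0) (hk' : k' ≠ 0) {a b a' b' : F}
    (e : t0 = k • (w + (algebraMap F K a + algebraMap F K b * r) • t))
    (e' : t = k' • (w0 + (algebraMap F K a' + algebraMap F K b' * r0) • t0)) {x y : F}
    (hxy : algebraMap F K x + algebraMap F K y * r ≠ 0) :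
    ∃ x' y' : F, (algebraMap F K x + algebraMap F K y * r) *
      (algebraMap F K x' + algebraMap F K y' * r0) * (k * k') = 1 := by
  have hnz : w + (algebraMap F K (a + x) + algebraMap F K (b + y) * r) • t ≠ 0 := by
    intro h0
    have := (h.2.2.1 (algebraMap F K (a + x) + algebraMap F K (b + y) * r) 1
      (by rw [← h0]; module)).2
    exact one_ne_zero this
  have hR := Rp.mk hnz
  have hm := hsub (Or.inr ⟨_, _, hR⟩)
  rcases hm with hm | ⟨c, d, hm⟩
  · exfalso
    obtain ⟨m, hm0, em⟩ := hR.unique hm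
    rw [e] at em
    simp only [map_add] at em
    obtain ⟨h1, h2⟩ := h.2.2.1
      ((k - m) * (algebraMap F K a + algebraMap F K b * r) -
        m * (algebraMap F K x + algebraMap F K y * r)) (k - m)
      (by linear_combination (norm := module) em)
    rw [h2] at h1
    simp [hm0, hxy] at h1
  · obtain ⟨m, hm0, em⟩ := hm.unique hR
    refine ⟨c - a', d - b', ?_⟩
    simp only [map_add, map_sub] at em ⊢
    have e1 : w0 = k'⁻¹ • t - (algebraMap F K a' + algebraMap F K b' * r0) • t0 := by
      nth_rw 1 [e']
      match_scalars <;> field_simp <;> simp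
    rw [e1, e] at em
    obtain ⟨h1, h2⟩ := h.2.2.1
      ((algebraMap F K a + algebraMap F K x + (algebraMap F K b + algebraMap F K y) * r)
        - m * k'⁻¹ - m * (algebraMap F K c + algebraMap F K d * r0 -
          (algebraMap F K a' + algebraMap F K b' * r0)) * k *
          (algebraMap F K a + algebraMap F K b * r))
      (1 - m * (algebraMap F K c + algebraMap F K d * r0 -
          (algebraMap F K a' + algebraMap F K b' * r0)) * k)
      (by linear_combination (norm := module) em)
    have h3 : algebraMap F K x + algebraMap F K y * r = m * k'⁻¹ := by
      linear_combination h1 - (algebraMap F K a + algebraMap F K b * r) * h2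
    rw [h3]
    field_simp
    linear_combination -h2

lemma centre_unique {t w t0 w0 : Fin 3 → K} {r r0 : K} (h : NF F t w r) (h0 : NF F t0 w0 r0)
    (hdeg : ∀ x y z : F, algebraMap F K x + algebraMap F K y * r + algebraMap F K z * r ^ 2 = 0 →
      x = 0 ∧ y = 0 ∧ z = 0)
    (heq : spl F t w r = spl F t0 w0 r0) {T T0 : PGPoint K} (hT : Rp T t) (hT0 : Rp T0 t0) :
    T = T0 := by
  by_contra hne
  have hm0 : T0 ∈ spl F t w r := by
    rw [heq]
    exact Or.inl hT0
  have hm : T ∈ spl F t0 w0 r0 := by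
    rw [← heq]
    exact Or.inl hT
  rcases hm0 with hm0 | ⟨a, b, hm0⟩
  · exact hne (hT.eq hm0)
  rcases hm with hm | ⟨a', b', hm⟩
  · exact hne (hm.eq hT0)
  obtain ⟨k, hk, e⟩ := hm0.unique hT0
  obtain ⟨k', hk', e'⟩ := hm.unique hT
  have hr : r ≠ 0 := fun hr => h.2.2.2 0 (by simp [hr])
  have hr1 : 1 + r ≠ 0 := fun hr => h.2.2.2 (-1) (by simp; linear_combination -hr)
  obtain ⟨x1, y1, e1⟩ := centre_aux h heq.subset hk hk' e e' (x := 1) (y := 0) (by simp)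
  obtain ⟨x2, y2, e2⟩ := centre_aux h heq.subset hk hk' e e' (x := 0) (y := 1) (by simpa using hr)
  simp only [map_one, map_zero, zero_mul, add_zero, one_mul, zero_add] at e1 e2
  have e3 : r * (algebraMap F K (x1 + x2) + algebraMap F K (y1 + y2) * r0) * (k * k') = 1 + r := by
    simp only [map_add]
    linear_combination r * e1 + e2
  obtain ⟨x, y, e4⟩ := centre_aux h0 heq.symm.subset hk' hk e' e (x := x1 + x2) (y := y1 + y2) (by
    intro h0
    rw [h0] at e3
    simp at e3
    exact hr1 e3.symm)
  have e5 : (1 + r) * (algebraMap F K x + algebraMap F K y * r) = r := by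
    linear_combination r * e4 - (algebraMap F K x + algebraMap F K y * r) * e3
  obtain ⟨h1, h2, h3⟩ := hdeg x (x + y - 1) y (by
    simp only [map_add, map_sub, map_one]
    linear_combination e5)
  simp [h1, h3] at h2

lemma match_aux {t w w0 : Fin 3 → K} {r r0 : K} (h : NF F t w r)
    (hsub : spl F t w r ⊆ spl F t w0 r0) (x y : F) :
    ∃ (m : K) (a b : F), m ≠ 0 ∧ w + (algebraMap F K x + algebraMap F K y * r) • t =
      m • (w0 + (algebraMap F K a + algebraMap F K b * r0) • t) := by
  have hnz : w + (algebraMap F K x + algebraMap F K y * r) • t ≠ 0 := by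
    intro h0
    have := (h.2.2.1 (algebraMap F K x + algebraMap F K y * r) 1
      (by rw [← h0]; module)).2
    exact one_ne_zero this
  have hR := Rp.mk hnz
  rcases hsub (Or.inr ⟨_, _, hR⟩) with hm | ⟨a, b, hm⟩
  · exfalso
    obtain ⟨m, hm0, em⟩ := hm.unique hR
    have := (h.2.2.1 (algebraMap F K x + algebraMap F K y * r - m) 1
      (by linear_combination (norm := module) em)).2
    exact one_ne_zero this
  · obtain ⟨m, hm0, em⟩ := hm.unique hR
    exact ⟨m, a, b, hm0, em⟩

lemma match_lemma {t w w0 u : Fin 3 → K} {r r0 : K} (h : NF F t w r) (h0 : NF F t w0 r0)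
    (hsub : spl F t w r ⊆ spl F t w0 r0) (hu : u 2 ≠ 0) :
    ∃ u' : Fin 3 → K, u' 2 ≠ 0 ∧ pl F t u' (r0 • u' - w0) = pl F t u (r • u - w) := by
  obtain ⟨l, e, g, hl, e1⟩ := match_aux h hsub 0 0
  simp only [map_zero, zero_mul, add_zero, zero_smul] at e1
  have main : ∀ x y : F, ∃ a b : F, algebraMap F K x + algebraMap F K y * r =
      l * (algebraMap F K a + algebraMap F K b * r0) := by
    intro x y
    obtain ⟨m, a, b, hm, e2⟩ := match_aux h hsub x y
    rw [e1] at e2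
    obtain ⟨h1, h2⟩ := h0.2.2.1
      (l * (algebraMap F K e + algebraMap F K g * r0) + (algebraMap F K x + algebraMap F K y * r) -
        m * (algebraMap F K a + algebraMap F K b * r0)) (l - m)
      (by linear_combination (norm := module) e2)
    refine ⟨a - e, b - g, ?_⟩
    simp only [map_sub]
    linear_combination h1 - (algebraMap F K a + algebraMap F K b * r0) * h2
  obtain ⟨a, b, ea⟩ := main 1 0
  obtain ⟨c, d, ec⟩ := main 0 1
  simp only [map_one, map_zero, zero_mul, add_zero, one_mul, zero_add] at ea ec
  have eD1 : algebraMap F K d + algebraMap F K (-b) * r = l * algebraMap F K (a * d - b * c) := by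
    simp only [map_neg, map_sub, map_mul]
    linear_combination algebraMap F K d * ea - algebraMap F K b * ec
  have eD2 : algebraMap F K (-c) + algebraMap F K a * r =
      l * algebraMap F K (a * d - b * c) * r0 := by
    simp only [map_neg, map_sub, map_mul]
    linear_combination -algebraMap F K c * ea + algebraMap F K a * ec
  have hD : a * d - b * c ≠ 0 := by
    intro hD
    rw [hD] at eD1 eD2
    obtain ⟨hd, hb⟩ := h.indep (x := d) (y := -b) (by rw [eD1]; simp)
    obtain ⟨hc, ha⟩ := h.indep (x := -c) (y := a) (by rw [eD2]; simp)
    have hb' : b = 0 := by simpa using hb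
    simp [ha, hb'] at ea
  have hD' : algebraMap F K a * algebraMap F K d - algebraMap F K b * algebraMap F K c ≠ 0 := by
    rw [← map_mul, ← map_mul, ← map_sub]
    rwa [Ne, map_eq_zero_iff _ (algebraMap F K).injective]
  set v := r • u - w with hv
  have hv' : r0 • (algebraMap F K d • u - algebraMap F K b • v - algebraMap F K g • t) - w0 =
      -(algebraMap F K c) • u + algebraMap F K a • v + algebraMap F K e • t := by
    have e2 : w0 = (algebraMap F K a + algebraMap F K b * r0) • w -
        (algebraMap F K e + algebraMap F K g * r0) • t := by
      rw [e1, smul_smul, mul_comm _ l, ← ea]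
      module
    have e3 : (algebraMap F K c + algebraMap F K d * r0) =
        r * (algebraMap F K a + algebraMap F K b * r0) := by
      linear_combination (algebraMap F K a + algebraMap F K b * r0) * ec * (-1) +
        (algebraMap F K c + algebraMap F K d * r0) * ea
    rw [e2, hv]
    have e4 := congrArg (fun z : K => z • u) e3
    linear_combination (norm := module) e4
  refine ⟨algebraMap F K d • u - algebraMap F K b • v - algebraMap F K g • t, ?_, ?_⟩
  · have : (algebraMap F K d • u - algebraMap F K b • v - algebraMap F K g • t) 2 =
        l * algebraMap F K (a * d - b * c) * u 2 := by
      rw [hv]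
      simp only [Pi.smul_apply, Pi.sub_apply, h.1, h.2.1, smul_eq_mul]
      rw [← eD1, map_neg]
      ring
    rw [this]
    refine mul_ne_zero (mul_ne_zero hl ?_) hu
    rwa [Ne, map_eq_zero_iff _ (algebraMap F K).injective]
  · rw [hv']
    clear_value v
    apply Set.Subset.antisymm
    · refine pl_le _ _ _ _ _ _ ⟨1, 0, 0, by simp⟩ ⟨-g, d, -b, ?_⟩ ⟨e, -c, a, ?_⟩
      · simp only [map_neg]
        module
      · simp only [map_neg]
        module
    · refine pl_le _ _ _ _ _ _ ⟨1, 0, 0, by simp⟩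
        ⟨(a * g - b * e) / (a * d - b * c), a / (a * d - b * c), b / (a * d - b * c), ?_⟩
        ⟨(c * g - d * e) / (a * d - b * c), c / (a * d - b * c), d / (a * d - b * c), ?_⟩
      · simp only [map_div₀, map_sub, map_mul, div_eq_mul_inv]
        have eI := congrArg (fun z : K => z • u) (mul_inv_cancel₀ hD')
        simp only [one_smul] at eI
        linear_combination (norm := module) -eI
      · simp only [map_div₀, map_sub, map_mul, div_eq_mul_inv]
        have eI := congrArg (fun z : K => z • v) (mul_inv_cancel₀ hD')
        simp only [one_smul] at eI
        linear_combination (norm := module) -eI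

/-- A vector whose point, together with that of its translate by `t`, lies in the subplane. -/
lemma mem_span {t u v p : Fin 3 → K} (hi : Ind t u v) (hnp : ∀ k : K, p ≠ k • t)
    {P Q : PGPoint K} (hP : Rp P p) (hQ : Rp Q (p + t)) (hPm : P ∈ pl F t u v)
    (hQm : Q ∈ pl F t u v) :
    ∃ x y z : F, p = algebraMap F K x • t + algebraMap F K y • u + algebraMap F K z • v := by
  obtain ⟨x, y, z, h1⟩ := hPm
  obtain ⟨x', y', z', h2⟩ := hQm
  obtain ⟨k, hk, e1⟩ := h1.unique hP
  obtain ⟨k', hk', e2⟩ := h2.unique hQ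
  rw [e1] at e2
  obtain ⟨ex, ey, ez⟩ := hi (k * algebraMap F K x + 1 - k' * algebraMap F K x')
    (k * algebraMap F K y - k' * algebraMap F K y') (k * algebraMap F K z - k' * algebraMap F K z')
    (by linear_combination (norm := module) e2)
  suffices ∃ s : F, k = algebraMap F K s by
    obtain ⟨s, rfl⟩ := this
    refine ⟨s * x, s * y, s * z, ?_⟩
    rw [e1]
    simp only [map_mul]
    module
  have aux : ∀ y y' : F, y ≠ 0 → k * algebraMap F K y - k' * algebraMap F K y' = 0 →
      ∃ s : F, k = algebraMap F K s := by
    intro y y' hy ey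
    have hy0 : algebraMap F K y ≠ 0 := by simpa using hy
    have hy' : algebraMap F K y' ≠ 0 := by
      intro h0
      rw [h0] at ey
      simp [hk, hy] at ey
    have e3 : k * algebraMap F K (y * x' - x * y') = algebraMap F K y' := by
      simp only [map_mul, map_sub]
      linear_combination algebraMap F K x' * ey - algebraMap F K y' * ex
    have hne : algebraMap F K (y * x' - x * y') ≠ 0 := by
      intro h0
      rw [h0] at e3
      simp at e3
      exact hy' (by simp [← e3])
    refine ⟨y' / (y * x' - x * y'), ?_⟩
    rw [map_div₀, eq_div_iff hne, e3]
  by_cases hy : y = 0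
  · by_cases hz : z = 0
    · exfalso
      apply hnp (k * algebraMap F K x)
      rw [e1, hy, hz, map_zero]
      module
    · exact aux z z' hz ez
  · exact aux y y' hy ey

lemma inj_lemma {t w u u' : Fin 3 → K} {r : K} (h : NF F t w r) (hu : u 2 ≠ 0) (hu' : u' 2 ≠ 0)
    (heq : pl F t u (r • u - w) = pl F t u' (r • u' - w)) : u = u' := by
  have hi := h.ind hu
  have hi' := h.ind hu'
  have hr : r ≠ 0 := fun hr => h.2.2.2 0 (by simp [hr])
  have mem : ∀ p : Fin 3 → K, p 2 ≠ 0 → (∃ x y z : F, p = algebraMap F K x • t +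
      algebraMap F K y • u + algebraMap F K z • (r • u - w)) →
      ∃ x y z : F, p = algebraMap F K x • t +
      algebraMap F K y • u' + algebraMap F K z • (r • u' - w) := by
    rintro p hp ⟨x, y, z, e⟩
    have hp0 : p ≠ 0 := by
      rintro rfl
      simp at hp
    have hp1 : p + t ≠ 0 := by
      intro h0
      have := congrFun h0 2
      simp [h.1] at this
      exact hp this
    refine mem_span hi' ?_ (Rp.mk hp0) (Rp.mk hp1) ?_ ?_
    · rintro k rfl
      simp [h.1] at hp
    · rw [← heq]
      refine ⟨x, y, z, ?_⟩
      rw [← e]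
      exact Rp.mk hp0
    · rw [← heq]
      refine ⟨x + 1, y, z, ?_⟩
      convert Rp.mk hp1 using 1
      rw [e]
      simp only [map_add, map_one]
      module
  obtain ⟨x, y, z, e⟩ := mem u hu ⟨0, 1, 0, by simp⟩
  obtain ⟨x2, y2, z2, e2⟩ := mem (r • u - w) (by simp [h.2.1, hr, hu]) ⟨0, 0, 1, by simp⟩
  obtain ⟨h1, h2, h3⟩ := hi' (r * algebraMap F K x - algebraMap F K x2)
    (r * algebraMap F K y - algebraMap F K y2 - r) (r * algebraMap F K z - algebraMap F K z2 + 1)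
    (by linear_combination (norm := module) e2 - r • e)
  obtain ⟨-, hx⟩ := h.indep (x := -x2) (y := x) (by simp only [map_neg]; linear_combination h1)
  obtain ⟨-, hy⟩ := h.indep (x := -y2) (y := y - 1)
    (by simp only [map_neg, map_sub, map_one]; linear_combination h2)
  obtain ⟨-, hz⟩ := h.indep (x := -z2 + 1) (y := z)
    (by simp only [map_neg, map_add, map_one]; linear_combination h3)
  have hy' : y = 1 := by linear_combination hy
  rw [e, hx, hy', hz]
  simp

lemma deg_lemma (hfr : Module.finrank F K = 3) (r : K)
    (hr : ∀ x : F, algebraMap F K x ≠ r) (x y z : F)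
    (h0 : algebraMap F K x + algebraMap F K y * r + algebraMap F K z * r ^ 2 = 0) :
    x = 0 ∧ y = 0 ∧ z = 0 := by
  have : FiniteDimensional F K := Module.finite_of_finrank_pos (by rw [hfr]; norm_num)
  let p : Polynomial F := Polynomial.C z * Polynomial.X ^ 2 + Polynomial.C y * Polynomial.X +
    Polynomial.C x
  have hint : IsIntegral F r := IsIntegral.of_finite F r
  have hp : Polynomial.aeval r p = 0 := by
    simp only [p, map_add, map_mul, map_pow, Polynomial.aeval_C, Polynomial.aeval_X]
    linear_combination h0
  have hpz : p = 0 := by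
    by_contra hne
    have h1 := Polynomial.natDegree_le_natDegree (minpoly.degree_le_of_ne_zero F r hne hp)
    have h2 : p.natDegree ≤ 2 := Polynomial.natDegree_quadratic_le
    have h3 := minpoly.degree_dvd hint
    rw [hfr, Nat.dvd_prime Nat.prime_three] at h3
    have h4 : (minpoly F r).natDegree = 1 := by omega
    rw [minpoly.natDegree_eq_one_iff] at h4
    obtain ⟨x, hx⟩ := h4
    exact hr x hx
  refine ⟨?_, ?_, ?_⟩
  · simpa [p] using congrArg (fun q => Polynomial.coeff q 0) hpz
  · simpa [p, Polynomial.coeff_X, Polynomial.coeff_C] using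
      congrArg (fun q => Polynomial.coeff q 1) hpz
  · simpa [p, Polynomial.coeff_X, Polynomial.coeff_C] using
      congrArg (fun q => Polynomial.coeff q 2) hpz

end

lemma card_lemma (q : ℕ) (K : Type) [Field K] [Fintype K] (hK : Fintype.card K = q ^ 3) :
    {u : Fin 3 → K | u 2 ≠ 0}.ncard = q ^ 6 * (q ^ 3 - 1) := by
  classical
  have : {u : Fin 3 → K | u 2 ≠ 0} =
      (Fintype.piFinset (![Finset.univ, Finset.univ, {0}ᶜ] : Fin 3 → Finset K) : Set (Fin 3 → K)) := by
    ext u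
    simp [Fin.forall_fin_succ]
  rw [this, Set.ncard_coe_finset, Fintype.card_piFinset, Fin.prod_univ_three]
  simp only [Matrix.cons_val, Finset.card_univ, Finset.card_compl, hK, Finset.card_singleton]
  ring

/-- the number of order-`q`-subplanes tangent to `ℓ∞` with a given
tangent splash `S` is `q⁶(q³−1)`. -/
theorem statement10 (q : ℕ) (F K : Type) [Field F] [Field K] [Fintype F] [Fintype K]
    [Algebra F K] (hF : Fintype.card F = q) (hK : Fintype.card K = q ^ 3)
    (S : Set (PGPoint K)) (T : PGPoint K) (hS : IsTangentSplash F S T) :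
    {π : Set (PGPoint K) | IsSubplane F π ∧ (∃ T' : PGPoint K, π ∩ linf K = {T'}) ∧
      splash π = S}.ncard = q ^ 6 * (q ^ 3 - 1) := by
  subst hF
  have hcard := Module.card_eq_pow_finrank (K := F) (V := K)
  rw [hK] at hcard
  have hfr : Module.finrank F K = 3 :=
    (Nat.pow_right_injective (Fintype.one_lt_card (α := F)) hcard).symm
  obtain ⟨π₀, hsub, htan, rfl⟩ := hS
  obtain ⟨t, ht⟩ := Rp.exists T
  obtain ⟨u₀, w, r, hn, hu₀, rfl⟩ := normal_form hsub htan ht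
  rw [hn.splash hu₀]
  rw [← card_lemma (Fintype.card F) K hK]
  have himg : {π : Set (PGPoint K) | IsSubplane F π ∧ (∃ T' : PGPoint K, π ∩ linf K = {T'}) ∧
      splash π = spl F t w r} = (fun u => pl F t u (r • u - w)) '' {u : Fin 3 → K | u 2 ≠ 0} := by
    ext π
    constructor
    · rintro ⟨h1, ⟨T', h2⟩, h3⟩
      obtain ⟨t', ht'⟩ := Rp.exists T'
      obtain ⟨u₁, w₁, r₁, hn₁, hu₁, e⟩ := normal_form h1 h2 ht'
      rw [e, hn₁.splash hu₁] at h3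
      have hTT := centre_unique hn₁ hn (deg_lemma hfr r₁ hn₁.2.2.2) h3 ht' ht
      subst hTT
      obtain ⟨u₂, w₂, r₂, hn₂, hu₂, rfl⟩ := normal_form h1 h2 ht
      have h4 : spl F t w₂ r₂ = spl F t w r := by
        rw [← hn₂.splash hu₂, e, hn₁.splash hu₁, h3]
      obtain ⟨u', hu', e'⟩ := match_lemma hn₂ hn h4.subset hu₂
      exact ⟨u', hu', e'⟩
    · rintro ⟨u, hu, rfl⟩
      exact ⟨(isSubplane_iff_s10 _).2 ⟨_, _, _, hn.ind hu, rfl⟩, ⟨T, hn.tangent hu ht⟩, hn.splash hu⟩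
  rw [himg]
  exact Set.InjOn.ncard_image (fun u hu u' hu' h => inj_lemma hn hu hu' h)

end TangentSplashPaper
end

section
/- Let q be a prime power. The number of tangent splashes of the line ℓ∞ of PG(2,q³) is q(q³+1)(q²+q+1), and for each fixed point T of ℓ∞, the number of tangent splashes of ℓ∞ with centre T is q(q²+q+1). -/
namespace TangentSplashPaper

open Projectivization

def dt {F K : Type} [Field F] [Field K] [Algebra F K] (m : Fin 3 → F) (y : Fin 3 → K) : K :=
  m 0 • y 0 + m 1 • y 1 + m 2 • y 2

def vmap {F : Type} (K : Type) [Field F] [Field K] [Algebra F K] (v : Fin 3 → F) : Fin 3 → K :=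
  fun i => algebraMap F K (v i)

section
variable {F K : Type} [Field F] [Field K] [Algebra F K]

lemma mem_linf (x : Fin 3 → K) (hx : x ≠ 0) :
    Projectivization.mk K x hx ∈ linf K ↔ x 2 = 0 := by
  obtain ⟨a, ha⟩ := Projectivization.exists_smul_eq_mk_rep K x hx
  show (Projectivization.mk K x hx).rep 2 = 0 ↔ _
  rw [← ha]
  simp [Units.smul_def]

lemma vmap_ne {v : Fin 3 → F} (h : v ≠ 0) : vmap K v ≠ 0 := by
  intro h0
  apply h
  funext i
  have := congrFun h0 i
  simpa [vmap] using this

lemma mem_sub (f : (Fin 3 → K) ≃ₗ[K] (Fin 3 → K)) (x : Fin 3 → K) (hx : x ≠ 0) :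
    Projectivization.mk K x hx ∈ hmap f '' basePlane F K ↔
      ∃ v : Fin 3 → F, ∃ k : K, k ≠ 0 ∧ f.symm x = k • vmap K v := by
  constructor
  · rintro ⟨P, ⟨v, hv, rfl, hr⟩, h⟩
    choose w hw using hr
    have hvw : v = vmap K w := by
      funext i; simp [vmap, hw]
    rw [hmap, Projectivization.map_mk, Projectivization.mk_eq_mk_iff] at h
    obtain ⟨a, ha⟩ := h
    refine ⟨w, (a⁻¹ : Kˣ), by simp, ?_⟩
    rw [LinearEquiv.symm_apply_eq, map_smul, ← hvw]
    have : a⁻¹ • (a • x) = a⁻¹ • f v := by rw [ha]; rfl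
    simpa [Units.smul_def] using this
  · rintro ⟨v, k, hk, h⟩
    have hv : vmap K v ≠ 0 := by
      intro h0
      rw [h0, smul_zero] at h
      exact hx (by simpa using h)
    refine ⟨Projectivization.mk K (vmap K v) hv, ⟨_, hv, rfl, fun i => ⟨v i, rfl⟩⟩, ?_⟩
    rw [hmap, Projectivization.map_mk, Projectivization.mk_eq_mk_iff']
    refine ⟨k⁻¹, ?_⟩
    rw [LinearEquiv.symm_apply_eq] at h
    rw [h, map_smul, smul_smul, inv_mul_cancel₀ hk, one_smul]
    rfl

lemma dt_add (m : Fin 3 → F) (y z : Fin 3 → K) : dt m (y + z) = dt m y + dt m z := by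
  simp [dt]; abel

lemma dt_smul (m : Fin 3 → F) (k : K) (y : Fin 3 → K) : dt m (k • y) = k * dt m y := by
  simp [dt, Algebra.smul_def]; ring

lemma dt_vmap (m v : Fin 3 → F) : dt m (vmap K v) = algebraMap F K (dt m v) := by
  simp [dt, Algebra.smul_def, vmap]

def dtL (K : Type) [Field K] [Algebra F K] (m : Fin 3 → F) : (Fin 3 → K) →ₗ[K] K where
  toFun := dt m
  map_add' := dt_add m
  map_smul' := dt_smul m

lemma exists_perp (m : Fin 3 → F) (hm : m ≠ 0) : ∃ u v : Fin 3 → F, dt m u = 0 ∧ dt m v = 0 ∧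
    crossProduct u v ≠ 0 := by
  have : m 0 ≠ 0 ∨ m 1 ≠ 0 ∨ m 2 ≠ 0 := by
    by_contra! h
    apply hm
    funext i
    fin_cases i
    · exact h.1
    · exact h.2.1
    · exact h.2.2
  rcases this with h | h | h
  · refine ⟨![-m 1, m 0, 0], ![-m 2, 0, m 0], ?_, ?_, fun h0 => ?_⟩
    · simp [dt]; ring
    · simp [dt]; ring
    · have := congrFun h0 0
      simp [cross_apply, h] at this
  · refine ⟨![m 1, -m 0, 0], ![0, -m 2, m 1], ?_, ?_, fun h0 => ?_⟩
    · simp [dt]; ring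
    · simp [dt]; ring
    · have := congrFun h0 1
      simp [cross_apply, h] at this
  · refine ⟨![m 2, 0, -m 0], ![0, m 2, -m 1], ?_, ?_, fun h0 => ?_⟩
    · simp [dt]; ring
    · simp [dt]; ring
    · have := congrFun h0 2
      simp [cross_apply, h] at this

lemma cross_vmap (u v : Fin 3 → F) :
    crossProduct (vmap K u) (vmap K v) = vmap K (crossProduct u v) := by
  funext i
  fin_cases i <;> simp [vmap, cross_apply]

lemma mem_splash (f : (Fin 3 → K) ≃ₗ[K] (Fin 3 → K)) (x : Fin 3 → K) (hx : x ≠ 0) :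
    Projectivization.mk K x hx ∈ splash (hmap f '' basePlane F K) ↔
      x 2 = 0 ∧ ∃ m : Fin 3 → F, m ≠ 0 ∧ dt m (f.symm x) = 0 := by
  rw [splash, Set.mem_ofPred_eq, mem_linf]
  refine and_congr_right fun _ => ?_
  constructor
  · rintro ⟨P, Q, hP, hQ, hne, ℓ, ⟨W, hW, rfl⟩, h1, h2, h3⟩
    induction P using Projectivization.ind with | _ p hp
    induction Q using Projectivization.ind with | _ r hr
    rw [mem_sub] at hP hQ
    obtain ⟨u, k, hk, hu⟩ := hP
    obtain ⟨v, l, hl, hv⟩ := hQ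
    simp only [Set.mem_ofPred_eq, Projectivization.submodule_mk,
      Submodule.span_singleton_le_iff_mem] at h1 h2 h3
    have hli : LinearIndependent K ![p, r] := by
      rw [LinearIndependent.pair_iff' hp]
      intro a ha
      apply hne
      symm
      rw [Projectivization.mk_eq_mk_iff']
      exact ⟨a, ha⟩
    have hspan : Submodule.span K (Set.range ![p, r]) = W := by
      apply Submodule.eq_of_le_of_finrank_eq
      · rw [Submodule.span_le]
        rintro _ ⟨i, rfl⟩
        fin_cases i <;> assumption
      · rw [finrank_span_eq_card hli, hW]; rfl
    refine ⟨crossProduct u v, ?_, ?_⟩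
    · intro h0
      have h4 := hli.map' f.symm.toLinearMap f.symm.ker
      have h5 : (f.symm.toLinearMap ∘ ![p, r]) = ![k • vmap K u, l • vmap K v] := by
        funext i
        fin_cases i
        · simpa using hu
        · simpa using hv
      rw [h5, ← crossProduct_ne_zero_iff_linearIndependent] at h4
      apply h4
      rw [map_smul, map_smul, LinearMap.smul_apply, cross_vmap, h0]
      funext i
      simp [vmap]
    · rw [← hspan, Matrix.range_cons, Matrix.range_cons, Matrix.range_empty, Set.union_empty,
        Set.singleton_union, Submodule.mem_span_pair] at h3
      obtain ⟨a, b, rfl⟩ := h3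
      rw [map_add, map_smul, map_smul, hu, hv]
      simp only [dt_add, dt_smul, dt_vmap]
      have e1 : dt (crossProduct u v) u = 0 := by
        simp [dt, cross_apply]; ring
      have e2 : dt (crossProduct u v) v = 0 := by
        simp [dt, cross_apply]; ring
      simp [e1, e2]
  · rintro ⟨m, hm, h⟩
    obtain ⟨u, v, hu, hv, huv⟩ := exists_perp m hm
    have hu0 : vmap K u ≠ 0 := by
      apply vmap_ne; rintro rfl; simp at huv
    have hv0 : vmap K v ≠ 0 := by
      apply vmap_ne; rintro rfl; simp at huv
    have hfu : f (vmap K u) ≠ 0 := by simpa using hu0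
    have hfv : f (vmap K v) ≠ 0 := by simpa using hv0
    refine ⟨Projectivization.mk K _ hfu, Projectivization.mk K _ hfv, ?_, ?_, ?_,
      {P | P.submodule ≤ LinearMap.ker ((dtL K m).comp f.symm.toLinearMap)}, ⟨_, ?_, rfl⟩, ?_, ?_, ?_⟩
    · rw [mem_sub]; exact ⟨u, 1, one_ne_zero, by simp⟩
    · rw [mem_sub]; exact ⟨v, 1, one_ne_zero, by simp⟩
    · intro he
      rw [Projectivization.mk_eq_mk_iff'] at he
      obtain ⟨a, ha⟩ := he
      rw [← map_smul] at ha
      have ha := f.injective ha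
      apply vmap_ne (K := K) huv
      rw [← cross_vmap, ← ha]
      simp
    · have hne : (dtL K m).comp f.symm.toLinearMap ≠ 0 := by
        intro h0
        apply hm
        funext i
        have := LinearMap.congr_fun h0 (f (Pi.single i 1))
        fin_cases i <;> simpa [dtL, dt, Algebra.smul_def] using this
      have := Module.Dual.finrank_ker_add_one_of_ne_zero (f := (dtL K m).comp f.symm.toLinearMap) hne
      simp at this
      omega
    · simp [Projectivization.submodule_mk, Submodule.span_singleton_le_iff_mem, dtL, dt_vmap, hu]
    · simp [Projectivization.submodule_mk, Submodule.span_singleton_le_iff_mem, dtL, dt_vmap, hv]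
    · simpa [Projectivization.submodule_mk, Submodule.span_singleton_le_iff_mem, dtL] using h

structure Good (t s : Fin 3 → K) : Prop where
  t2 : t 2 = 0
  s2 : s 2 = 0
  d : t 0 * s 1 - t 1 * s 0 ≠ 0

lemma Good.indep {t s : Fin 3 → K} (g : Good t s) {a b : K} (h : a • t + b • s = 0) :
    a = 0 ∧ b = 0 := by
  have h0 := congrFun h 0
  have h1 := congrFun h 1
  simp at h0 h1
  constructor
  · apply (mul_eq_zero.1 (?_ : a * (t 0 * s 1 - t 1 * s 0) = 0)).resolve_right g.d
    linear_combination s 1 * h0 - s 0 * h1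
  · apply (mul_eq_zero.1 (?_ : b * (t 0 * s 1 - t 1 * s 0) = 0)).resolve_right g.d
    linear_combination t 0 * h1 - t 1 * h0

lemma Good.symm {t s : Fin 3 → K} (g : Good t s) : Good s t :=
  ⟨g.s2, g.t2, fun h => g.d (by linear_combination -h)⟩

lemma Good.shift {t s : Fin 3 → K} (g : Good t s) (x : K) : Good t (x • t + s) :=
  ⟨g.t2, by simp [g.t2, g.s2], fun h => g.d (by simp at h; linear_combination h)⟩

lemma Good.ne {t s : Fin 3 → K} (g : Good t s) : t ≠ 0 := by
  rintro rfl
  exact g.d (by simp)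

lemma Good.ne' {t s : Fin 3 → K} (g : Good t s) (x : K) : x • t + s ≠ 0 := by
  intro h
  have := (g.indep (a := x) (b := 1) (by simpa using h)).2
  simp at this

lemma Good.decomp {t s : Fin 3 → K} (g : Good t s) (z : Fin 3 → K) (hz : z 2 = 0) :
    ∃ a b : K, z = a • t + b • s := by
  have := g.d
  obtain ⟨D, hD⟩ : ∃ D, D = t 0 * s 1 - t 1 * s 0 := ⟨_, rfl⟩
  rw [← hD] at this
  refine ⟨(z 0 * s 1 - z 1 * s 0) / D, (t 0 * z 1 - t 1 * z 0) / D, ?_⟩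
  funext i
  fin_cases i
  · simp; field_simp; rw [hD]; ring
  · simp; field_simp; rw [hD]; ring
  · simp [hz, g.t2, g.s2]

lemma Good.ne_mk {t s : Fin 3 → K} (g : Good t s) (x : K) :
    Projectivization.mk K (x • t + s) (g.ne' x) ≠ Projectivization.mk K t g.ne := by
  intro h
  rw [Projectivization.mk_eq_mk_iff'] at h
  obtain ⟨a, ha⟩ := h
  have := (g.indep (a := x - a) (b := 1) (by rw [sub_smul, ha]; simp)).2
  simp at this

lemma Good.inj_mk {t s : Fin 3 → K} (g : Good t s) (x y : K)
    (h : Projectivization.mk K (x • t + s) (g.ne' x) = Projectivization.mk K (y • t + s) (g.ne' y)) :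
    x = y := by
  rw [Projectivization.mk_eq_mk_iff'] at h
  obtain ⟨a, ha⟩ := h
  have := g.indep (a := a * y - x) (b := a - 1)
    (by
      have h0 : a • (y • t + s) - (x • t + s) = 0 := by rw [ha, sub_self]
      rw [← h0]
      module)
  obtain ⟨h1, h2⟩ := this
  have : a = 1 := by linear_combination h2
  subst this
  linear_combination -h1

lemma Good.cases {t s : Fin 3 → K} (g : Good t s) (X : PGPoint K) (hX : X ∈ linf K) :
    X = Projectivization.mk K t g.ne ∨ ∃ x, X = Projectivization.mk K (x • t + s) (g.ne' x) := by
  induction X using Projectivization.ind with | _ z hz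
  rw [mem_linf] at hX
  obtain ⟨a, b, rfl⟩ := g.decomp z hX
  by_cases hb : b = 0
  · left
    rw [Projectivization.mk_eq_mk_iff']
    exact ⟨a, by simp [hb]⟩
  · right
    refine ⟨a / b, ?_⟩
    rw [Projectivization.mk_eq_mk_iff']
    refine ⟨b, ?_⟩
    rw [smul_add, smul_smul, mul_div_cancel₀ _ hb]

def Sset (t s : Fin 3 → K) (φ : Module.Dual F K) (c : F) : Set (PGPoint K) :=
  {X | (∃ h, X = Projectivization.mk K t h) ∨
    ∃ x h, φ x = c ∧ X = Projectivization.mk K (x • t + s) h}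

lemma mem_Sset {t s : Fin 3 → K} (g : Good t s) (φ : Module.Dual F K) (c : F) (x : K) :
    Projectivization.mk K (x • t + s) (g.ne' x) ∈ Sset t s φ c ↔ φ x = c := by
  constructor
  · rintro (⟨h, h'⟩ | ⟨y, h, rfl, h'⟩)
    · exact absurd h' (g.ne_mk x)
    · rw [g.inj_mk x y h']
  · intro h
    exact Or.inr ⟨x, _, h, rfl⟩

lemma eq_Sset {t s : Fin 3 → K} (g : Good t s) (φ : Module.Dual F K) (c : F)
    (S : Set (PGPoint K)) (hS : S ⊆ linf K) (hT : Projectivization.mk K t g.ne ∈ S)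
    (h : ∀ x, Projectivization.mk K (x • t + s) (g.ne' x) ∈ S ↔ φ x = c) : S = Sset t s φ c := by
  ext X
  constructor
  · intro hX
    rcases g.cases X (hS hX) with rfl | ⟨x, rfl⟩
    · exact Or.inl ⟨_, rfl⟩
    · exact Or.inr ⟨x, _, (h x).1 hX, rfl⟩
  · rintro (⟨h, rfl⟩ | ⟨y, h', hy, rfl⟩)
    · exact hT
    · exact (h y).2 hy

def dtR (F : Type) [Field F] [Algebra F K] (y : Fin 3 → K) : (Fin 3 → F) →ₗ[F] K where
  toFun m := dt m y
  map_add' m n := by simp [dt, add_smul]; abel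
  map_smul' m n := by simp [dt, mul_smul, smul_add]

lemma exists_one (a : Fin 3 → F) (ha : a ≠ 0) : ∃ w : Fin 3 → F, dt w a = 1 := by
  obtain ⟨i, hi⟩ := Function.ne_iff.1 ha
  refine ⟨Pi.single i (a i)⁻¹, ?_⟩
  have : a i ≠ 0 := hi
  fin_cases i <;> simp [dt] <;> simp at this <;> simp [this]

lemma cross_zero {b y : Fin 3 → K} (hb : b ≠ 0) (h : crossProduct b y = 0) : ∃ k : K, y = k • b := by
  by_contra! h'
  have : LinearIndependent K ![b, y] := by
    rw [LinearIndependent.pair_iff' hb]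
    intro a ha
    exact h' a ha.symm
  rw [← crossProduct_ne_zero_iff_linearIndependent] at this
  exact this h

lemma inj_aux {t s : Fin 3 → K} (g : Good t s) (f : (Fin 3 → K) ≃ₗ[K] (Fin 3 → K))
    (hT : hmap f '' basePlane F K ∩ linf K = {Projectivization.mk K t g.ne})
    (a : Fin 3 → F) (l : K) (hl : l ≠ 0) (ha : f.symm t = l • vmap K a) (m : Fin 3 → F)
    (h1 : dt m a = 0) (h2 : dt m (f.symm s) = 0) : m = 0 := by
  by_contra hm
  have ha0 : a ≠ 0 := by
    rintro rfl
    apply g.ne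
    have : f.symm t = 0 := by rw [ha]; funext i; simp [vmap]
    simpa using this
  obtain ⟨w, hw⟩ := exists_one a ha0
  set B := f.symm s with hB
  set b := crossProduct m w with hb
  have hwb : dt w b = 0 := by simp [hb, cross_apply, dt]; ring
  have hb0 : b ≠ 0 := by
    intro h0
    obtain ⟨k, hk⟩ := cross_zero hm h0
    have : dt w a = k * dt m a := by rw [hk]; simp [dt]; ring
    rw [hw, h1] at this
    simp at this
  have hc : crossProduct (vmap K b) (B - dt w B • vmap K a) = 0 := by
    have e1 : dt m (B - dt w B • vmap K a) = 0 := by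
      rw [sub_eq_add_neg, ← neg_smul, dt_add, dt_smul, dt_vmap, h1, h2]; simp
    have e2 : dt w (B - dt w B • vmap K a) = 0 := by
      rw [sub_eq_add_neg, ← neg_smul, dt_add, dt_smul, dt_vmap, hw]; simp
    generalize B - dt w B • vmap K a = y at e1 e2
    rw [hb, ← cross_vmap, cross_cross_eq_smul_sub_smul]
    have e1' : vmap K m ⬝ᵥ y = 0 := by
      rw [← e1]; simp [dt, vmap, Algebra.smul_def, dotProduct, Fin.sum_univ_three]
    have e2' : vmap K w ⬝ᵥ y = 0 := by
      rw [← e2]; simp [dt, vmap, Algebra.smul_def, dotProduct, Fin.sum_univ_three]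
    rw [e1', e2']
    simp
  obtain ⟨k, hk⟩ := cross_zero (vmap_ne hb0) hc
  have hs : s = (dt w B * l⁻¹) • t + k • f (vmap K b) := by
    apply f.symm.injective
    rw [map_add, map_smul, map_smul, ← hB, ha, f.symm_apply_apply, ← hk, smul_smul, mul_assoc,
      inv_mul_cancel₀ hl]
    simp
  have hk0 : k ≠ 0 := by
    rintro rfl
    have := (g.indep (a := dt w B * l⁻¹) (b := -1) (by
      conv_lhs => rw [hs]
      simp)).2
    simp at this
  have hfb : f (vmap K b) ≠ 0 := by simpa using vmap_ne hb0
  have hmem : Projectivization.mk K _ hfb ∈ hmap f '' basePlane F K ∩ linf K := by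
    refine ⟨?_, ?_⟩
    · rw [mem_sub]; exact ⟨b, 1, one_ne_zero, by simp⟩
    · rw [mem_linf]
      have := congrFun hs 2
      simp [g.t2, g.s2, hk0] at this
      exact this
  rw [hT, Set.mem_singleton_iff, Projectivization.mk_eq_mk_iff'] at hmem
  obtain ⟨r, hr⟩ := hmem
  have hr2 : r • l • vmap K a = vmap K b := by
    rw [← ha, ← map_smul, hr, f.symm_apply_apply]
  have h3 := congrArg (dt w) hr2
  rw [dt_smul, dt_smul, dt_vmap, dt_vmap, hw, hwb] at h3
  simp [hl] at h3
  subst h3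
  apply hfb
  rw [← hr, zero_smul]

lemma forward (h3 : Module.finrank F K = 3) {t s : Fin 3 → K} (g : Good t s) (S : Set (PGPoint K))
    (hS : IsTangentSplash F S (Projectivization.mk K t g.ne)) :
    ∃ φ : Module.Dual F K, φ ≠ 0 ∧ ∃ c : F, S = Sset t s φ c := by
  have : FiniteDimensional F K := Module.finite_of_finrank_pos (by omega)
  obtain ⟨_, ⟨f, rfl⟩, hT, rfl⟩ := hS
  have hTm : Projectivization.mk K t g.ne ∈ hmap f '' basePlane F K ∩ linf K := by rw [hT]; rfl
  obtain ⟨a, l, hl, ha⟩ := (mem_sub f t g.ne).1 hTm.1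
  have hinj := inj_aux g f hT a l hl ha
  have ha0 : a ≠ 0 := by
    rintro rfl
    apply g.ne
    have : f.symm t = 0 := by rw [ha]; funext i; simp [vmap]
    simpa using this
  obtain ⟨w, hw⟩ := exists_one a ha0
  set B := f.symm s with hB
  let A : (Fin 3 → F) →ₗ[F] F := dtR F a
  have hA : A ≠ 0 := by
    intro h
    have := LinearMap.congr_fun h w
    change dt w a = 0 at this
    simp [hw] at this
  have hkA : Module.finrank F (LinearMap.ker A) = 2 := by
    have := Module.Dual.finrank_ker_add_one_of_ne_zero (f := A) hA
    simp at this
    omega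
  let Ψ : (Fin 3 → F) →ₗ[F] K := dtR F ((-l⁻¹) • B)
  have hΨ : ∀ m, Ψ m = -l⁻¹ * dt m B := fun m => dt_smul m _ _
  let P : Submodule F K := LinearMap.range (Ψ.domRestrict (LinearMap.ker A))
  have hP : Module.finrank F P = 2 := by
    rw [← hkA]
    apply LinearMap.finrank_range_of_inj
    rw [← LinearMap.ker_eq_bot, LinearMap.ker_eq_bot']
    rintro ⟨m, hm⟩ h
    have h' : Ψ m = 0 := h
    rw [hΨ] at h'
    have : dt m B = 0 := by simpa [hl] using h'
    exact Subtype.ext (hinj m hm this)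
  have hPt : P < ⊤ := by
    rw [lt_top_iff_ne_top]
    intro h
    rw [h, finrank_top, h3] at hP
    omega
  obtain ⟨φ, hφ, hle⟩ := P.exists_le_ker_of_lt_top hPt
  have hPe : P = LinearMap.ker φ := by
    apply Submodule.eq_of_le_of_finrank_eq hle
    have := Module.Dual.finrank_ker_add_one_of_ne_zero (f := φ) hφ
    omega
  refine ⟨φ, hφ, φ (Ψ w), eq_Sset g _ _ _ (fun X hX => hX.1) ?_ ?_⟩
  · rw [mem_splash]
    refine ⟨g.t2, ?_⟩
    obtain ⟨u, v, hu, hv, huv⟩ := exists_perp a ha0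
    refine ⟨u, ?_, ?_⟩
    · rintro rfl; simp at huv
    · have : dt u a = 0 := by rw [← hu]; simp [dt]; ring
      rw [ha, dt_smul, dt_vmap, this]; simp
  · intro x
    rw [mem_splash]
    have e0 : φ x = φ (Ψ w) ↔ x - Ψ w ∈ P := by
      rw [hPe, LinearMap.mem_ker, map_sub, sub_eq_zero]
    have e1 : ∀ m : Fin 3 → F, dt m (f.symm (x • t + s)) = x * l * algebraMap F K (dt m a) + dt m B := by
      intro m
      rw [map_add, map_smul, ha, dt_add, dt_smul, dt_smul, dt_vmap]
      ring
    rw [e0]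
    constructor
    · rintro ⟨-, m, hm, h⟩
      rw [e1] at h
      have hma : dt m a ≠ 0 := by
        intro h0
        rw [h0] at h
        exact hm (hinj m h0 (by simpa using h))
      refine ⟨⟨(dt m a)⁻¹ • m - w, ?_⟩, ?_⟩
      · rw [LinearMap.mem_ker, map_sub, map_smul]
        change (dt m a)⁻¹ • dt m a - dt w a = 0
        rw [hw, smul_eq_mul, inv_mul_cancel₀ hma, sub_self]
      · change Ψ ((dt m a)⁻¹ • m - w) = _
        rw [map_sub, map_smul, hΨ m, Algebra.smul_def, map_inv₀]
        have : algebraMap F K (dt m a) ≠ 0 := by simpa using hma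
        congr 1
        field_simp
        linear_combination -h
    · rintro ⟨⟨m, hm⟩, h⟩
      change Ψ m = _ at h
      have hm' : dt m a = 0 := hm
      refine ⟨by simp [g.t2, g.s2], m + w, ?_, ?_⟩
      · intro h0
        have : A (m + w) = 0 := by rw [h0, map_zero]
        rw [map_add] at this
        change dt m a + dt w a = 0 at this
        rw [hm', hw] at this
        simp at this
      · rw [e1]
        have h4 : dt (m + w) a = 1 := by
          change A (m + w) = 1
          rw [map_add]
          change dt m a + dt w a = 1
          rw [hm', hw, zero_add]
        have h5 : x = Ψ (m + w) := by rw [map_add, h]; ring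
        rw [h4, h5, hΨ]
        field_simp
        simp

lemma exists_equiv_s11 {t s : Fin 3 → K} (g : Good t s) (B : Fin 3 → K) (hB : B 1 ≠ 0) :
    ∃ f : (Fin 3 → K) ≃ₗ[K] (Fin 3 → K), f.symm t = Pi.single 0 1 ∧ f.symm s = B := by
  let f0 : (Fin 3 → K) →ₗ[K] (Fin 3 → K) :=
    { toFun := fun y => (y 0 - y 1 * (B 0 / B 1)) • t + (y 1 / B 1) • s +
        (y 2 - y 1 * (B 2 / B 1)) • (Pi.single 2 1 : Fin 3 → K)
      map_add' := by
        intro y z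
        simp only [Pi.add_apply, add_mul, add_div]
        module
      map_smul' := by
        intro k y
        simp only [Pi.smul_apply, smul_eq_mul, mul_assoc, mul_div_assoc, RingHom.id_apply]
        module }
  have hf0 : ∀ y, f0 y = (y 0 - y 1 * (B 0 / B 1)) • t + (y 1 / B 1) • s +
        (y 2 - y 1 * (B 2 / B 1)) • (Pi.single 2 1 : Fin 3 → K) := fun y => rfl
  have hinj : Function.Injective f0 := by
    rw [← LinearMap.ker_eq_bot, LinearMap.ker_eq_bot']
    intro y hy
    rw [hf0] at hy
    have h2 := congrFun hy 2
    simp [g.t2, g.s2] at h2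
    rw [h2, zero_smul, add_zero] at hy
    obtain ⟨h0, h1⟩ := g.indep hy
    have h1' : y 1 = 0 := by simpa [hB] using h1
    rw [h1'] at h0 h2
    funext i
    fin_cases i
    · simpa using h0
    · simpa using h1'
    · simpa using h2
  let f := LinearEquiv.ofInjectiveEndo f0 hinj
  have hf : ∀ y, f y = f0 y := fun y => rfl
  refine ⟨f, ?_, ?_⟩
  · rw [LinearEquiv.symm_apply_eq, hf, hf0]
    simp
  · rw [LinearEquiv.symm_apply_eq, hf, hf0]
    have e0 : B 0 - B 1 * (B 0 / B 1) = 0 := by field_simp; ring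
    have e2 : B 2 - B 1 * (B 2 / B 1) = 0 := by field_simp; ring
    rw [e0, e2, div_self hB]
    simp

lemma ker_basis (h3 : Module.finrank F K = 3) (φ : Module.Dual F K) (hφ : φ ≠ 0) :
    ∃ u v : K, (∀ m n : F, m • u + n • v = 0 → m = 0 ∧ n = 0) ∧
      ∀ y, φ y = 0 ↔ ∃ m n : F, y = m • u + n • v := by
  have : FiniteDimensional F K := Module.finite_of_finrank_pos (by omega)
  have h2 : Module.finrank F (LinearMap.ker φ) = 2 := by
    have := Module.Dual.finrank_ker_add_one_of_ne_zero (f := φ) hφ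
    omega
  let b := Module.finBasisOfFinrankEq F (LinearMap.ker φ) h2
  refine ⟨b 0, b 1, ?_, ?_⟩
  · intro m n h
    have hb := b.linearIndependent
    rw [Fintype.linearIndependent_iff] at hb
    have := hb ![m, n] (by
      apply Subtype.ext
      simpa [Fin.sum_univ_two] using h)
    exact ⟨this 0, this 1⟩
  · intro y
    constructor
    · intro hy
      refine ⟨b.repr ⟨y, hy⟩ 0, b.repr ⟨y, hy⟩ 1, ?_⟩
      have := b.sum_repr ⟨y, hy⟩
      rw [Fin.sum_univ_two] at this
      have := congrArg Subtype.val this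
      simpa using this.symm
    · rintro ⟨m, n, rfl⟩
      have h0 : φ (b 0 : K) = 0 := (b 0).2
      have h1 : φ (b 1 : K) = 0 := (b 1).2
      simp [h0, h1]

lemma backward (h3 : Module.finrank F K = 3) {t s : Fin 3 → K} (g : Good t s)
    (φ : Module.Dual F K) (hφ : φ ≠ 0) (c : F) :
    IsTangentSplash F (Sset t s φ c) (Projectivization.mk K t g.ne) := by
  obtain ⟨u, v, hind, hspan⟩ := ker_basis h3 φ hφ
  obtain ⟨x0, hx0⟩ := LinearMap.surjective hφ c
  have hu : u ≠ 0 := by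
    rintro rfl
    have := (hind 1 0 (by simp)).1
    simp at this
  obtain ⟨f, hft, hfs⟩ := exists_equiv_s11 g ![-x0, u, v] hu
  have hx : ∀ x, f.symm (x • t + s) = ![x - x0, u, v] := by
    intro x
    rw [map_add, map_smul, hft, hfs]
    funext i
    fin_cases i <;> simp [sub_eq_add_neg]
  refine ⟨hmap f '' basePlane F K, ⟨f, rfl⟩, ?_, ?_⟩
  · ext X
    rw [Set.mem_singleton_iff]
    constructor
    · rintro ⟨h1, h2⟩
      rcases g.cases X h2 with rfl | ⟨x, rfl⟩
      · rfl
      · exfalso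
        rw [mem_sub] at h1
        obtain ⟨w, k, hk, h⟩ := h1
        rw [hx] at h
        have e1 := congrFun h 1
        have e2 := congrFun h 2
        simp [vmap] at e1 e2
        have := hind (w 2) (-w 1) (by
          rw [Algebra.smul_def, Algebra.smul_def, e1, e2, map_neg]; ring)
        have h1 : w 1 = 0 := by simpa using this.2
        rw [h1] at e1
        simp at e1
        exact hu e1
    · rintro rfl
      refine ⟨?_, ?_⟩
      · rw [mem_sub]
        refine ⟨Pi.single 0 1, 1, one_ne_zero, ?_⟩
        rw [hft]
        funext i
        fin_cases i <;> simp [vmap]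
      · rw [mem_linf]; exact g.t2
  · symm
    apply eq_Sset g
    · exact fun X hX => hX.1
    · rw [mem_splash]
      refine ⟨g.t2, Pi.single 1 1, by simp, ?_⟩
      rw [hft]
      simp [dt]
    · intro x
      rw [mem_splash, hx]
      have e : φ x = c ↔ φ (x - x0) = 0 := by rw [map_sub, hx0, sub_eq_zero]
      rw [e, hspan]
      constructor
      · rintro ⟨-, m, hm, h⟩
        simp [dt] at h
        have hm0 : m 0 ≠ 0 := by
          intro h0
          rw [h0, zero_smul, zero_add] at h
          obtain ⟨h1, h2⟩ := hind _ _ h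
          apply hm
          funext i
          fin_cases i
          · exact h0
          · exact h1
          · exact h2
        refine ⟨-((m 0)⁻¹ * m 1), -((m 0)⁻¹ * m 2), ?_⟩
        have : (m 0)⁻¹ • (m 0 • (x - x0) + m 1 • u + m 2 • v) = 0 := by rw [h, smul_zero]
        rw [smul_add, smul_add, smul_smul, smul_smul, smul_smul, inv_mul_cancel₀ hm0, one_smul] at this
        rw [neg_smul, neg_smul]
        linear_combination this
      · rintro ⟨m, n, h⟩
        refine ⟨by simp [g.t2, g.s2], ![-1, m, n], ?_, ?_⟩
        · intro h0
          have := congrFun h0 0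
          simp at this
        · simp [dt, h]

lemma deg_two (h3 : Module.finrank F K = 3) (α : K) (a b c : F) (habc : ¬ (a = 0 ∧ b = 0 ∧ c = 0))
    (h : a • α ^ 2 + b • α + algebraMap F K c = 0) : ∃ r : F, algebraMap F K r = α := by
  have : FiniteDimensional F K := Module.finite_of_finrank_pos (by omega)
  have hαint : IsIntegral F α := Algebra.IsIntegral.isIntegral α
  let p : Polynomial F := Polynomial.C a * Polynomial.X ^ 2 + Polynomial.C b * Polynomial.X
    + Polynomial.C c
  have hp : p ≠ 0 := by
    intro h0
    apply habc
    refine ⟨?_, ?_, ?_⟩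
    · have := congrArg (fun r => Polynomial.coeff r 2) h0
      simpa [p, Polynomial.coeff_X, Polynomial.coeff_C] using this
    · have := congrArg (fun r => Polynomial.coeff r 1) h0
      simpa [p, Polynomial.coeff_X, Polynomial.coeff_C] using this
    · have := congrArg (fun r => Polynomial.coeff r 0) h0
      simpa [p, Polynomial.coeff_X, Polynomial.coeff_C] using this
  have hroot : Polynomial.aeval α p = 0 := by
    rw [← h]
    simp [p, Algebra.smul_def]
  have hdvd := minpoly.dvd F α hroot
  have hle : (minpoly F α).natDegree ≤ 2 :=
    (Polynomial.natDegree_le_of_dvd hdvd hp).trans Polynomial.natDegree_quadratic_le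
  have hd : (minpoly F α).natDegree ∣ 3 := h3 ▸ minpoly.degree_dvd hαint
  have h1 : (minpoly F α).natDegree = 1 := by
    rcases (Nat.dvd_prime Nat.prime_three).1 hd with h | h
    · exact h
    · omega
  exact minpoly.natDegree_eq_one_iff.1 h1

lemma inv_mk {t s : Fin 3 → K} (g : Good t s) (x : K) (hx : x ≠ 0) :
    Projectivization.mk K (x • t + s) (g.ne' x) =
      Projectivization.mk K (x⁻¹ • s + t) (g.symm.ne' x⁻¹) := by
  rw [Projectivization.mk_eq_mk_iff']
  refine ⟨x, ?_⟩
  rw [smul_add, smul_smul, mul_inv_cancel₀ hx, one_smul, add_comm]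

lemma unique_aux (h3 : Module.finrank F K = 3) {t s : Fin 3 → K} (g : Good t s)
    (S : Set (PGPoint K)) (h1 : IsTangentSplash F S (Projectivization.mk K t g.ne))
    (h2 : IsTangentSplash F S (Projectivization.mk K s g.symm.ne)) : False := by
  have : FiniteDimensional F K := Module.finite_of_finrank_pos (by omega)
  obtain ⟨φ, hφ, c, rfl⟩ := forward h3 g S h1
  obtain ⟨ψ, hψ, d, hd⟩ := forward h3 g.symm _ h2
  have hc : c = 0 := by
    have : Projectivization.mk K ((0 : K) • t + s) (g.ne' 0) ∈ Sset t s φ c := by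
      rw [hd]
      exact Or.inl ⟨g.symm.ne, by congr 1; simp⟩
    rw [mem_Sset g] at this
    simpa using this.symm
  have hd0 : d = 0 := by
    have : Projectivization.mk K ((0 : K) • s + t) (g.symm.ne' 0) ∈ Sset s t ψ d := by
      rw [← hd]
      exact Or.inl ⟨g.ne, by congr 1; simp⟩
    rw [mem_Sset g.symm] at this
    simpa using this.symm
  subst hc hd0
  have key : ∀ x, x ≠ 0 → φ x = 0 → ψ x⁻¹ = 0 := by
    intro x hx h
    rw [← mem_Sset g.symm ψ 0, ← hd, ← inv_mk g x hx, mem_Sset g]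
    exact h
  obtain ⟨u, v, hind, hspan⟩ := ker_basis h3 φ hφ
  have hu : u ≠ 0 := by
    rintro rfl
    have := (hind 1 0 (by simp)).1
    simp at this
  have hv : v ≠ 0 := by
    rintro rfl
    have := (hind 0 1 (by simp)).2
    simp at this
  have huv : u + v ≠ 0 := by
    intro h
    have := (hind 1 1 (by simpa using h)).2
    simp at this
  have k1 := key u hu ((hspan u).2 ⟨1, 0, by simp⟩)
  have k2 := key v hv ((hspan v).2 ⟨0, 1, by simp⟩)
  have k3 := key (u + v) huv ((hspan _).2 ⟨1, 1, by simp⟩)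
  let w : Fin 3 → LinearMap.ker ψ := ![⟨_, k1⟩, ⟨_, k2⟩, ⟨_, k3⟩]
  have hw : ¬ LinearIndependent F w := by
    intro hw
    have h4 := hw.fintype_card_le_finrank
    have := Module.Dual.finrank_ker_add_one_of_ne_zero (f := ψ) hψ
    simp at h4
    omega
  rw [Fintype.not_linearIndependent_iff] at hw
  obtain ⟨m, hm, i, hi⟩ := hw
  have hm := congrArg Subtype.val hm
  simp [Fin.sum_univ_three, w] at hm
  obtain ⟨r, hr⟩ := deg_two h3 (v / u) (m 0) (m 0 + m 1 + m 2) (m 1) (by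
    rintro ⟨e0, e1, e2⟩
    rw [e0, e2] at e1
    apply hi
    fin_cases i
    · exact e0
    · exact e2
    · simpa using e1) (by
    simp only [Algebra.smul_def, map_add] at hm ⊢
    field_simp at hm ⊢
    linear_combination hm)
  have := (hind r (-1) (by
    rw [Algebra.smul_def, hr]
    field_simp
    simp)).2
  simp at this

lemma Sset_smul (t s : Fin 3 → K) (φ : Module.Dual F K) (c a : F) (ha : a ≠ 0) :
    Sset t s (a • φ) (a * c) = Sset t s φ c := by
  simp [Sset, ha]

lemma Sset_inj {t s : Fin 3 → K} (g : Good t s) (p p' : Projectivization F (Module.Dual F K))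
    (c c' : F) (h : Sset t s p.rep c = Sset t s p'.rep c') : p = p' ∧ c = c' := by
  have key : ∀ x, p.rep x = c ↔ p'.rep x = c' := by
    intro x
    rw [← mem_Sset g, h, mem_Sset g]
  obtain ⟨x0, hx0⟩ := LinearMap.surjective p.rep_nonzero c
  have hx0' := (key x0).1 hx0
  have hker : ∀ z, p.rep z = 0 → p'.rep z = 0 := by
    intro z hz
    have := (key (x0 + z)).1 (by rw [map_add, hx0, hz, add_zero])
    rw [map_add, hx0'] at this
    simpa using this
  obtain ⟨y, hy⟩ := LinearMap.surjective p.rep_nonzero 1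
  have hs : p'.rep y • p.rep = p'.rep := by
    ext z
    have := hker (z - p.rep z • y) (by rw [map_sub, map_smul, hy]; simp)
    rw [map_sub, map_smul, sub_eq_zero] at this
    rw [this]
    simp [mul_comm]
  have hp : p = p' := by
    rw [← p.mk_rep, ← p'.mk_rep]
    symm
    rw [Projectivization.mk_eq_mk_iff']
    exact ⟨_, hs⟩
  subst hp
  exact ⟨rfl, hx0.symm.trans hx0'⟩

lemma tangent_iff_s11 (h3 : Module.finrank F K = 3) {t s : Fin 3 → K} (g : Good t s)
    (S : Set (PGPoint K)) : IsTangentSplash F S (Projectivization.mk K t g.ne) ↔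
      ∃ p : Projectivization F (Module.Dual F K), ∃ c : F, Sset t s p.rep c = S := by
  constructor
  · intro h
    obtain ⟨φ, hφ, c, rfl⟩ := forward h3 g S h
    obtain ⟨a, ha⟩ := Projectivization.exists_smul_eq_mk_rep F φ hφ
    refine ⟨Projectivization.mk F φ hφ, a * c, ?_⟩
    rw [← ha]
    exact Sset_smul t s φ c a a.ne_zero
  · rintro ⟨p, c, rfl⟩
    exact backward h3 g _ p.rep_nonzero c

lemma exists_good (T : PGPoint K) (hT : T ∈ linf K) :
    ∃ t s : Fin 3 → K, ∃ g : Good t s, T = Projectivization.mk K t g.ne := by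
  induction T using Projectivization.ind with | _ t ht
  rw [mem_linf] at hT
  by_cases h0 : t 0 = 0
  · have h1 : t 1 ≠ 0 := by
      intro h1
      apply ht
      funext i
      fin_cases i
      · exact h0
      · exact h1
      · exact hT
    exact ⟨t, ![1, 0, 0], ⟨hT, rfl, by simpa using h1⟩, rfl⟩
  · exact ⟨t, ![0, 1, 0], ⟨hT, rfl, by simpa using h0⟩, rfl⟩

lemma center_unique (h3 : Module.finrank F K = 3) (S : Set (PGPoint K)) (T T' : PGPoint K)
    (h : IsTangentSplash F S T) (h' : IsTangentSplash F S T') : T = T' := by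
  have hl : ∀ T : PGPoint K, IsTangentSplash F S T → T ∈ linf K := by
    rintro T ⟨π, -, hT, -⟩
    have : T ∈ π ∩ linf K := by rw [hT]; rfl
    exact this.2
  obtain ⟨t, s, g, rfl⟩ := exists_good T (hl T h)
  rcases g.cases T' (hl T' h') with h0 | ⟨x, rfl⟩
  · exact h0.symm
  · exact (unique_aux h3 (g.shift x) S h h').elim

lemma card_linf [Finite K] : Nat.card (linf K) = Nat.card K + 1 := by
  have g : Good (![1, 0, 0] : Fin 3 → K) ![0, 1, 0] := ⟨rfl, rfl, by simp⟩
  have e : linf K = insert (Projectivization.mk K _ g.ne)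
      (Set.range fun x => Projectivization.mk K _ (g.ne' x)) := by
    ext X
    constructor
    · intro hX
      rcases g.cases X hX with rfl | ⟨x, rfl⟩
      · exact Or.inl rfl
      · exact Or.inr ⟨x, rfl⟩
    · rintro (rfl | ⟨x, rfl⟩)
      · rw [mem_linf]; rfl
      · rw [mem_linf]; simp
  rw [Nat.card_coe_set_eq, e, Set.ncard_insert_of_notMem, ← Set.image_univ,
    Set.ncard_image_of_injective, Set.ncard_univ]
  · intro x y h
    exact g.inj_mk x y h
  · rintro ⟨x, hx⟩
    exact g.ne_mk x hx

end

/-- the number of tangent splashes of `ℓ∞` is `q(q³+1)(q²+q+1)`, and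
for each point `T` of `ℓ∞` the number of tangent splashes with centre `T` is
`q(q²+q+1)`. -/
theorem statement11 (q : ℕ) (F K : Type) [Field F] [Field K] [Fintype F] [Fintype K]
    [Algebra F K] (hF : Fintype.card F = q) (hK : Fintype.card K = q ^ 3) :
    {S : Set (PGPoint K) | ∃ T : PGPoint K, IsTangentSplash F S T}.ncard =
      q * (q ^ 3 + 1) * (q ^ 2 + q + 1) ∧
    ∀ T : PGPoint K, T ∈ linf K →
      {S : Set (PGPoint K) | IsTangentSplash F S T}.ncard = q * (q ^ 2 + q + 1) := by
  have : Module.Finite F K := Module.Finite.of_finite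
  have hq : 1 < q := hF ▸ Fintype.one_lt_card
  have h3 : Module.finrank F K = 3 := by
    have := Module.card_eq_pow_finrank (K := F) (V := K)
    rw [hF, hK] at this
    exact (Nat.pow_right_injective hq this).symm
  have hP : Nat.card (Projectivization F (Module.Dual F K)) = q ^ 2 + q + 1 := by
    rw [Projectivization.card_of_finrank F (Module.Dual F K) (n := 3)
      (by rw [Subspace.dual_finrank_eq, h3])]
    simp [Finset.sum_range_succ, hF]
    ring
  have hFc : Nat.card F = q := by rw [Nat.card_eq_fintype_card, hF]
  constructor
  · choose t s g hT using fun T : linf K => exists_good T.1 T.2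
    have e : {S : Set (PGPoint K) | ∃ T : PGPoint K, IsTangentSplash F S T} =
        Set.range (fun x : linf K × Projectivization F (Module.Dual F K) × F =>
          Sset (t x.1) (s x.1) x.2.1.rep x.2.2) := by
      ext S
      constructor
      · rintro ⟨T, h⟩
        have hl : T ∈ linf K := by
          obtain ⟨π, -, hT, -⟩ := h
          have : T ∈ π ∩ linf K := by rw [hT]; rfl
          exact this.2
        have h' := h
        rw [show T = _ from hT ⟨T, hl⟩, tangent_iff_s11 h3 (g ⟨T, hl⟩)] at h'
        obtain ⟨p, c, h'⟩ := h'
        exact ⟨(⟨T, hl⟩, p, c), h'⟩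
      · rintro ⟨⟨T, p, c⟩, rfl⟩
        exact ⟨_, (tangent_iff_s11 h3 (g T) _).2 ⟨p, c, rfl⟩⟩
    rw [e, ← Set.image_univ, Set.ncard_image_of_injective, Set.ncard_univ, Nat.card_prod,
      Nat.card_prod, card_linf, hP, hFc, Nat.card_eq_fintype_card, hK]
    · ring
    · rintro ⟨T, p, c⟩ ⟨T', p', c'⟩ h
      have h1 := (tangent_iff_s11 h3 (g T) _).2 ⟨p, c, rfl⟩
      have h2 := (tangent_iff_s11 h3 (g T') _).2 ⟨p', c', rfl⟩
      dsimp only at h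
      rw [← h, ← hT] at h2
      rw [← hT] at h1
      have hTT : T = T' := Subtype.ext (center_unique h3 _ _ _ h1 h2)
      subst hTT
      obtain ⟨rfl, rfl⟩ := Sset_inj (g T) _ _ _ _ h
      rfl
  · intro T hT
    obtain ⟨t, s, g, rfl⟩ := exists_good T hT
    have e : {S : Set (PGPoint K) | IsTangentSplash F S (Projectivization.mk K t g.ne)} =
        Set.range (fun x : Projectivization F (Module.Dual F K) × F =>
          Sset t s x.1.rep x.2) := by
      ext S
      rw [Set.mem_ofPred_eq, tangent_iff_s11 h3 g]
      simp
    rw [e, ← Set.image_univ, Set.ncard_image_of_injective, Set.ncard_univ, Nat.card_prod,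
      hP, hFc]
    · ring
    · rintro ⟨p, c⟩ ⟨p', c'⟩ h
      obtain ⟨rfl, rfl⟩ := Sset_inj g _ _ _ _ h
      rfl

end TangentSplashPaper
end
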